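/- Let (U,ρ) be a complete separable metric space, let g ∈ W(ℝ,U), and let t ↦ μ[·;t] be a Weyl almost periodic measure-valued function in W_1(ℝ, M(U)). Then for every δ ∈ (0,1) there exists a function f_δ ∈ W(ℝ,U) such that Mod f_δ ⊆ Mod g + Mod μ[·;·], f_δ(t) ∈ supp μ[·;t] for a.e. t ∈ ℝ, and ρ(f_δ(t), g(t)) < r_δ(g(t), μ[·;t]) + δ for a.e. t ∈ ℝ. -/

import Mathlib

open MeasureTheory Filter Topology TopologicalSpace
open scoped ENNReal Pointwise

noncomputable section

/-- The truncated ("bounded") distance `ρ'(x,y) = min {1, ρ(x,y)}` on a metric space. -/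
def bdist {α : Type*} [PseudoMetricSpace α] : α → α → ℝ := fun x y => min 1 (dist x y)

/-- The Hausdorff distance `dist_{ρ'}` (corresponding to the truncated metric `ρ'`)
between non-empty closed subsets of a metric space. -/
def clDist {α : Type*} [MetricSpace α] : Closeds α → Closeds α → ℝ :=
  fun A B => (min 1 (EMetric.hausdorffEdist (A : Set α) (B : Set α))).toReal

/-- The Hausdorff distance `dist_ρ` between (non-empty closed bounded) subsets. -/
def clbDist {α : Type*} [MetricSpace α] : Closeds α → Closeds α → ℝ :=
  fun A B => Metric.hausdorffDist (A : Set α) (B : Set α)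

/-- `D^{(d)}_{p,l}(f,g) = ( sup_ξ (1/l) ∫_ξ^{ξ+l} d(f t, g t)^p dt )^{1/p}`,
valued in `ℝ≥0∞`. -/
def weylD {α : Type*} (d : α → α → ℝ) (p l : ℝ) (f g : ℝ → α) : ℝ≥0∞ :=
  (⨆ ξ : ℝ, ENNReal.ofReal (1 / l) *
      ∫⁻ t in Set.Icc ξ (ξ + l), ENNReal.ofReal (d (f t) (g t) ^ p)) ^ (1 / p)

/-- The Weyl semimetric `D^{(d)}_p(f,g) = lim_{l → +∞} D^{(d)}_{p,l}(f,g)`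
(the limit exists; it is formalized here as a `limsup`). -/
def weylDinf {α : Type*} (d : α → α → ℝ) (p : ℝ) (f g : ℝ → α) : ℝ≥0∞ :=
  Filter.limsup (fun l => weylD d p l f g) Filter.atTop

/-- Membership in `M_p(ℝ, α)`: `f` is (strongly) measurable and
`sup_ξ ∫_ξ^{ξ+1} d(f t, x₀)^p dt < +∞`. -/
def MemMp {α : Type*} [TopologicalSpace α] (d : α → α → ℝ) (p : ℝ) (x₀ : α)
    (f : ℝ → α) : Prop :=
  AEStronglyMeasurable f MeasureTheory.volume ∧
  ∃ C : ℝ, ∀ ξ : ℝ,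
    (∫⁻ t in Set.Icc ξ (ξ + 1), ENNReal.ofReal (d (f t) x₀ ^ p)) ≤ ENNReal.ofReal C

/-- A set `T ⊆ ℝ` is relatively dense. -/
def RelDense (T : Set ℝ) : Prop := ∃ a > 0, ∀ ξ : ℝ, (Set.Icc ξ (ξ + a) ∩ T).Nonempty

/-- The set of `(ε, D^{(d)}_{p,l})`-almost periods of `f`. -/
def APeriodsL {α : Type*} (d : α → α → ℝ) (p l ε : ℝ) (f : ℝ → α) : Set ℝ :=
  {τ | weylD d p l f (fun t => f (t + τ)) < ENNReal.ofReal ε}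

/-- The set `P^{(d)}_p(ε; f)` of `(ε, D^{(d)}_p)`-almost periods of `f`. -/
def APeriods {α : Type*} (d : α → α → ℝ) (p ε : ℝ) (f : ℝ → α) : Set ℝ :=
  {τ | weylDinf d p f (fun t => f (t + τ)) < ENNReal.ofReal ε}

/-- Membership in the space `W_p(ℝ, α)` of Weyl almost periodic functions of order `p`
w.r.t. the distance `d` (with distinguished point `x₀`). -/
def MemWp {α : Type*} [TopologicalSpace α] (d : α → α → ℝ) (p : ℝ) (x₀ : α)
    (f : ℝ → α) : Prop :=
  MemMp d p x₀ f ∧ ∀ ε > 0, ∃ l > 0, RelDense (APeriodsL d p l ε f)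

/-- The module `Mod f`: the additive group of all `λ ∈ ℝ` such that `e^{iλτ_j} → 1`
for every `f`-returning sequence `{τ_j}` (a sequence with `D^{(d)}_1(f, f(·+τ_j)) → 0`,
where `d` is the relevant bounded distance). -/
def WMod {α : Type*} (d : α → α → ℝ) (f : ℝ → α) : Set ℝ :=
  {lam : ℝ | ∀ τ : ℕ → ℝ,
    Tendsto (fun j => weylDinf d 1 f (fun t => f (t + τ j))) atTop (nhds 0) →
    Tendsto (fun j => Complex.exp (Complex.I * ((lam * τ j : ℝ) : ℂ))) atTop (nhds 1)}

/-- `κ_W(T) = lim_{l → +∞} sup_ξ (1/l) meas([ξ, ξ+l] ∩ T)` (formalized as a `limsup`). -/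
def kappaW (T : Set ℝ) : ℝ≥0∞ :=
  Filter.limsup (fun l : ℝ => ⨆ ξ : ℝ,
    ENNReal.ofReal (1 / l) * MeasureTheory.volume (Set.Icc ξ (ξ + l) ∩ T)) Filter.atTop

/-- Membership in `M*_p(ℝ, α)`. -/
def MemMpStar {α : Type*} [TopologicalSpace α] (d : α → α → ℝ) (p : ℝ) (x₀ : α)
    (f : ℝ → α) : Prop :=
  MemMp d p x₀ f ∧
  ∀ ε > 0, ∃ δ > 0, ∀ T : Set ℝ, MeasurableSet T → kappaW T < ENNReal.ofReal δ →
    Filter.limsup (fun l : ℝ => ⨆ ξ : ℝ, ENNReal.ofReal (1 / l) *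
        ∫⁻ t in Set.Icc ξ (ξ + l) ∩ T, ENNReal.ofReal (d (f t) x₀ ^ p)) Filter.atTop
      < ENNReal.ofReal ε

/-- Distance from a point to a set w.r.t. the distance `d`, valued in `ℝ≥0∞`
(`∞` for the empty set). -/
def dInfDist {α : Type*} (d : α → α → ℝ) (x : α) (K : Set α) : ℝ≥0∞ :=
  ⨅ y ∈ K, ENNReal.ofReal (d x y)

/-- Membership in `W̃_p(ℝ, α)`: conditions 1) (relatively dense sets of
`(ε, D^{(d)}_p)`-almost periods) and 2) (approximate compactness of values). -/
def MemWpTilde {α : Type*} [TopologicalSpace α] (d : α → α → ℝ) (p : ℝ) (x₀ : α)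
    (f : ℝ → α) : Prop :=
  MemMp d p x₀ f ∧
  (∀ ε > 0, RelDense (APeriods d p ε f)) ∧
  (∀ ε > 0, ∀ δ > 0, ∃ K : Set α, IsCompact K ∧
      kappaW {t | ENNReal.ofReal ε ≤ dInfDist d (f t) K} < ENNReal.ofReal δ)

/-- The support of a Borel measure on a topological space. -/
def measSupport {α : Type*} [TopologicalSpace α] [MeasurableSpace α]
    (μ : Measure α) : Set α :=
  {x | ∀ V : Set α, IsOpen V → x ∈ V → 0 < μ V}

/-- `r_δ(x, μ) = inf { r > 0 : μ[U_r(x)] > δ }`. -/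
def rdelta {α : Type*} [PseudoMetricSpace α] [MeasurableSpace α]
    (x : α) (μ : Measure α) (δ : ℝ) : ℝ :=
  sInf {r : ℝ | 0 < r ∧ ENNReal.ofReal δ < μ (Metric.ball x r)}

/-- The Lévy–Prokhorov distance on Borel probability measures. -/
def lpDist {α : Type*} [MeasurableSpace α] [PseudoEMetricSpace α] :
    ProbabilityMeasure α → ProbabilityMeasure α → ℝ :=
  fun μ ν => MeasureTheory.levyProkhorovDist (μ : Measure α) (ν : Measure α)

end


/-- trigonometric sum -/
noncomputable def trigS (N : ℕ) (c : ℕ → ℂ) (x : ℝ) : ℂ :=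
  ∑ n ∈ Finset.range N, c n * Complex.exp (-(n * x : ℝ) * Complex.I)

lemma sum_root (M : ℕ) (hM : 0 < M) (a b : ℕ) (ha : a < M) (hb : b < M) :
    ∑ k ∈ Finset.range M, Complex.exp (-(a * (2 * Real.pi * k / M) : ℝ) * Complex.I) *
      (starRingEnd ℂ) (Complex.exp (-(b * (2 * Real.pi * k / M) : ℝ) * Complex.I))
      = if a = b then (M : ℂ) else 0 := by
  have hM' : (M : ℂ) ≠ 0 := by exact_mod_cast hM.ne'
  have hMr : (M : ℝ) ≠ 0 := by exact_mod_cast hM.ne'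
  set w : ℂ := Complex.exp (2 * Real.pi * Complex.I * (((b : ℝ) - a) / M : ℝ)) with hw
  have h1 : ∀ k ∈ Finset.range M, Complex.exp (-(a * (2 * Real.pi * k / M) : ℝ) * Complex.I) *
      (starRingEnd ℂ) (Complex.exp (-(b * (2 * Real.pi * k / M) : ℝ) * Complex.I)) = w ^ k := by
    intro k _
    rw [← Complex.exp_conj, ← Complex.exp_add, hw, ← Complex.exp_nat_mul]
    congr 1
    simp only [map_mul, map_neg, Complex.conj_ofReal, Complex.conj_I]
    push_cast
    field_simp
    ring
  rw [Finset.sum_congr rfl h1]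
  split_ifs with hab
  · subst hab
    simp [hw]
  · have hw1 : w ≠ 1 := by
      intro h
      rw [hw, Complex.exp_eq_one_iff] at h
      obtain ⟨n, hn⟩ := h
      have h2 : ((((b : ℝ) - a) / M : ℝ) : ℂ) = n := by
        have : (2 * Real.pi * Complex.I : ℂ) ≠ 0 := by
          simp [Real.pi_ne_zero]
        apply mul_left_cancel₀ this
        rw [hn]; ring
      have h3 : (((b : ℝ) - a) / M : ℝ) = n := by exact_mod_cast h2
      rw [div_eq_iff hMr] at h3
      have h4 : (b : ℤ) - a = n * M := by exact_mod_cast h3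
      have h5 : |(b : ℤ) - a| < M := by rw [abs_lt]; constructor <;> omega
      rw [h4, abs_mul] at h5
      have hn0 : n = 0 := by
        by_contra hne
        have : 1 ≤ |n| := Int.one_le_abs hne
        have h6 : |(M : ℤ)| = M := by simp
        rw [h6] at h5
        nlinarith
      subst hn0
      apply hab
      omega
    have hwM : w ^ M = 1 := by
      rw [hw, ← Complex.exp_nat_mul, Complex.exp_eq_one_iff]
      refine ⟨(b : ℤ) - a, ?_⟩
      push_cast
      field_simp
    have := geom_sum_mul w M
    rw [hwM, sub_self] at this
    exact (mul_eq_zero.1 this).resolve_right (sub_ne_zero.2 hw1)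

lemma parseval (M Y : ℕ) (hM : 0 < M) (hY : Y ≤ M) (c : ℕ → ℂ) :
    ∑ k ∈ Finset.range M, ‖trigS Y c (2 * Real.pi * k / M)‖ ^ 2
      = M * ∑ n ∈ Finset.range Y, ‖c n‖ ^ 2 := by
  have key : ∑ k ∈ Finset.range M, (trigS Y c (2 * Real.pi * k / M)) *
      (starRingEnd ℂ) (trigS Y c (2 * Real.pi * k / M))
      = M * ∑ n ∈ Finset.range Y, c n * (starRingEnd ℂ) (c n) := by
    unfold trigS
    simp only [map_sum, Finset.sum_mul_sum, map_mul]
    rw [Finset.sum_comm]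
    rw [Finset.mul_sum]
    apply Finset.sum_congr rfl
    intro a ha
    rw [Finset.sum_comm]
    have : ∀ b ∈ Finset.range Y, ∑ k ∈ Finset.range M,
        c a * Complex.exp (-(a * (2 * Real.pi * k / M) : ℝ) * Complex.I) *
        ((starRingEnd ℂ) (c b) *
          (starRingEnd ℂ) (Complex.exp (-(b * (2 * Real.pi * k / M) : ℝ) * Complex.I)))
        = if a = b then c a * (starRingEnd ℂ) (c b) * M else 0 := by
      intro b hb
      have := sum_root M hM a b (by have := Finset.mem_range.1 ha; omega)
        (by have := Finset.mem_range.1 hb; omega)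
      have e : ∀ k ∈ Finset.range M, c a * Complex.exp (-(a * (2 * Real.pi * k / M) : ℝ) * Complex.I) *
        ((starRingEnd ℂ) (c b) *
          (starRingEnd ℂ) (Complex.exp (-(b * (2 * Real.pi * k / M) : ℝ) * Complex.I)))
          = c a * (starRingEnd ℂ) (c b) * (Complex.exp (-(a * (2 * Real.pi * k / M) : ℝ) * Complex.I) *
          (starRingEnd ℂ) (Complex.exp (-(b * (2 * Real.pi * k / M) : ℝ) * Complex.I))) := by
        intro k _; ring
      rw [Finset.sum_congr rfl e, ← Finset.mul_sum, this]
      split_ifs <;> simp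
    rw [Finset.sum_congr rfl this, Finset.sum_ite_eq, if_pos ha]
    ring
  have e2 : ∀ z : ℂ, ((‖z‖ ^ 2 : ℝ) : ℂ) = z * (starRingEnd ℂ) z := by
    intro z; rw [Complex.mul_conj, Complex.normSq_eq_norm_sq]
  have : ((∑ k ∈ Finset.range M, ‖trigS Y c (2 * Real.pi * k / M)‖ ^ 2 : ℝ) : ℂ)
      = ((M * ∑ n ∈ Finset.range Y, ‖c n‖ ^ 2 : ℝ) : ℂ) := by
    rw [Complex.ofReal_sum, Complex.ofReal_mul, Complex.ofReal_sum]
    simp only [e2]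
    exact_mod_cast key
  exact_mod_cast this

lemma trigS_mul (N : ℕ) (a b : ℕ → ℂ) (x : ℝ) :
    trigS N a x * trigS N b x = trigS (2 * N)
      (fun y => ∑ p ∈ (Finset.range N ×ˢ Finset.range N) with p.1 + p.2 = y, a p.1 * b p.2) x := by
  unfold trigS
  rw [Finset.sum_mul_sum, ← Finset.sum_product']
  rw [← Finset.sum_fiberwise_of_maps_to (s := Finset.range N ×ˢ Finset.range N)
    (t := Finset.range (2 * N)) (g := fun p => p.1 + p.2)]
  · apply Finset.sum_congr rfl
    intro y _
    rw [Finset.sum_mul]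
    apply Finset.sum_congr rfl
    intro p hp
    have hp2 := (Finset.mem_filter.1 hp).2
    rw [← hp2]
    have : Complex.exp (-(((p.1 + p.2 : ℕ) : ℝ) * x : ℝ) * Complex.I)
      = Complex.exp (-((p.1 : ℝ) * x : ℝ) * Complex.I) * Complex.exp (-((p.2 : ℝ) * x : ℝ) * Complex.I) := by
      rw [← Complex.exp_add]; congr 1; push_cast; ring
    rw [this]; ring
  · intro p hp
    simp only [Finset.mem_product, Finset.mem_range] at hp ⊢
    omega

lemma norm_sq_lower (s : Finset (ℕ × ℕ)) (w : ℕ × ℕ → ℝ) (hw : ∀ p, 0 ≤ w p) (v : ℕ × ℕ → ℝ)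
    (hv : ∀ p ∈ s, ∀ q ∈ s, 0 < w p → 0 < w q → 1 / 2 ≤ Real.cos (v p - v q)) :
    (1 / 2) * (∑ p ∈ s, w p) ^ 2 ≤ ‖∑ p ∈ s, (w p : ℂ) * Complex.exp (v p * Complex.I)‖ ^ 2 := by
  have hre : (∑ p ∈ s, (w p : ℂ) * Complex.exp (v p * Complex.I)).re = ∑ p ∈ s, w p * Real.cos (v p) := by
    rw [Complex.re_sum]
    refine Finset.sum_congr rfl fun p _ => ?_
    rw [Complex.re_ofReal_mul, Complex.exp_ofReal_mul_I_re]
  have him : (∑ p ∈ s, (w p : ℂ) * Complex.exp (v p * Complex.I)).im = ∑ p ∈ s, w p * Real.sin (v p) := by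
    rw [Complex.im_sum]
    refine Finset.sum_congr rfl fun p _ => ?_
    rw [Complex.im_ofReal_mul, Complex.exp_ofReal_mul_I_im]
  rw [← Complex.normSq_eq_norm_sq, Complex.normSq_apply, hre, him, sq, Finset.sum_mul_sum,
    Finset.sum_mul_sum, Finset.sum_mul_sum, ← Finset.sum_add_distrib, Finset.mul_sum]
  refine Finset.sum_le_sum fun p hp => ?_
  rw [← Finset.sum_add_distrib, Finset.mul_sum]
  refine Finset.sum_le_sum fun q hq => ?_
  have e : w p * Real.cos (v p) * (w q * Real.cos (v q)) + w p * Real.sin (v p) * (w q * Real.sin (v q))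
      = w p * w q * Real.cos (v p - v q) := by rw [Real.cos_sub]; ring
  rw [e]
  rcases (hw p).eq_or_lt with h | h
  · rw [← h]; simp
  rcases (hw q).eq_or_lt with h' | h'
  · rw [← h']; simp
  have := hv p hp q hq h h'
  nlinarith [mul_pos h h']


lemma trigS_shift (N : ℕ) (g : ℕ → ℂ) (x v : ℝ) :
    trigS N g (x - v) = trigS N (fun n => g n * Complex.exp ((n * v : ℝ) * Complex.I)) x := by
  unfold trigS
  refine Finset.sum_congr rfl fun n _ => ?_
  rw [mul_assoc, ← Complex.exp_add]
  congr 2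
  push_cast
  ring

lemma trigS_periodic (N : ℕ) (g : ℕ → ℂ) (x : ℝ) :
    trigS N g (x - 2 * Real.pi) = trigS N g x := by
  unfold trigS
  refine Finset.sum_congr rfl fun n _ => ?_
  congr 1
  have : (-((n * (x - 2 * Real.pi) : ℝ) : ℂ) * Complex.I)
    = (-((n * x : ℝ) : ℂ) * Complex.I) + n * (2 * Real.pi * Complex.I) := by push_cast; ring
  rw [this, Complex.exp_add, Complex.exp_nat_mul_two_pi_mul_I, mul_one]

lemma find_freq (N : ℕ) (hN : 0 < N) (f g : ℕ → ℝ) (hf0 : ∀ n, 0 ≤ f n) (hf1 : ∀ n, f n ≤ 1)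
    (hg0 : ∀ n, 0 ≤ g n) (hg1 : ∀ n, g n ≤ 1) (v c : ℝ) (hc : 0 < c)
    (hfc : c * N ≤ ∑ n ∈ Finset.range N, f n) (hgc : c * N ≤ ∑ n ∈ Finset.range N, g n)
    (hcos : ∀ n m n' m' : ℕ, n + m = n' + m' → 0 < f n → 0 < f n' → 0 < g m → 0 < g m' →
      1 / 2 ≤ Real.cos (m * v - m' * v)) :
    ∃ x : ℝ, |x| ≤ Real.pi ∧ c ^ 2 / 4 * N ≤ ‖trigS N (fun n => f n) x‖ ∧
      c ^ 2 / 4 * N ≤ ‖trigS N (fun n => g n) (x - v)‖ := by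
  have hNr : (0 : ℝ) < N := by exact_mod_cast hN
  set G : ℕ → ℂ := fun n => (g n : ℂ) * Complex.exp ((n * v : ℝ) * Complex.I) with hG
  set F : ℕ → ℂ := fun n => (f n : ℂ) with hF
  -- it suffices to find a root index
  suffices h : ∃ k ∈ Finset.range (2 * N), c ^ 2 / 4 * N ≤ ‖trigS N F (2 * Real.pi * k / (2 * N : ℕ))‖ ∧
      c ^ 2 / 4 * N ≤ ‖trigS N G (2 * Real.pi * k / (2 * N : ℕ))‖ by
    obtain ⟨k, hk, h1, h2⟩ := h
    set y : ℝ := 2 * Real.pi * k / (2 * N : ℕ) with hy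
    have hy0 : 0 ≤ y := by positivity
    have hy2 : y ≤ 2 * Real.pi := by
      rw [hy, div_le_iff₀ (by positivity)]
      have : (k : ℝ) ≤ (2 * N : ℕ) := by exact_mod_cast (Finset.mem_range.1 hk).le
      gcongr
    rcases le_total y Real.pi with hyp | hyp
    · refine ⟨y, by rw [abs_of_nonneg hy0]; exact hyp, h1, ?_⟩
      rw [trigS_shift]; exact h2
    · refine ⟨y - 2 * Real.pi, by rw [abs_le]; constructor <;> linarith, ?_, ?_⟩
      · rw [trigS_periodic]; exact h1
      · rw [trigS_shift, trigS_periodic]; exact h2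
  by_contra hcon
  push Not at hcon
  have hM : 0 < 2 * N := by omega
  have hGn : ∀ n, ‖G n‖ = g n := by
    intro n
    rw [hG]; simp only [norm_mul, Complex.norm_exp_ofReal_mul_I, mul_one, Complex.norm_real]
    exact Real.norm_of_nonneg (hg0 n)
  have hFn : ∀ n, ‖F n‖ = f n := by
    intro n
    rw [hF]; simp only [Complex.norm_real]
    exact Real.norm_of_nonneg (hf0 n)
  -- upper bound
  have hup : ∑ k ∈ Finset.range (2 * N), ‖trigS N F (2 * Real.pi * k / (2 * N : ℕ)) *
      trigS N G (2 * Real.pi * k / (2 * N : ℕ))‖ ^ 2 ≤ (c ^ 2 / 4 * N) ^ 2 * ((2 * N : ℕ) * (N + N)) := by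
    have pF := parseval (2 * N) N hM (by omega) F
    have pG := parseval (2 * N) N hM (by omega) G
    have sF : ∑ n ∈ Finset.range N, ‖F n‖ ^ 2 ≤ N := by
      calc _ ≤ ∑ n ∈ Finset.range N, (1 : ℝ) := by
            refine Finset.sum_le_sum fun n _ => ?_
            rw [hFn]; exact pow_le_one₀ (hf0 n) (hf1 n)
        _ = N := by simp
    have sG : ∑ n ∈ Finset.range N, ‖G n‖ ^ 2 ≤ N := by
      calc _ ≤ ∑ n ∈ Finset.range N, (1 : ℝ) := by
            refine Finset.sum_le_sum fun n _ => ?_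
            rw [hGn]; exact pow_le_one₀ (hg0 n) (hg1 n)
        _ = N := by simp
    calc _ ≤ ∑ k ∈ Finset.range (2 * N), (c ^ 2 / 4 * N) ^ 2 *
            (‖trigS N F (2 * Real.pi * k / (2 * N : ℕ))‖ ^ 2 +
            ‖trigS N G (2 * Real.pi * k / (2 * N : ℕ))‖ ^ 2) := by
          refine Finset.sum_le_sum fun k hk => ?_
          rw [norm_mul, mul_pow]
          have := hcon k hk
          set A := ‖trigS N F (2 * Real.pi * k / (2 * N : ℕ))‖
          set B := ‖trigS N G (2 * Real.pi * k / (2 * N : ℕ))‖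
          have hA : 0 ≤ A := norm_nonneg _
          have hB : 0 ≤ B := norm_nonneg _
          by_cases hAE : c ^ 2 / 4 * N ≤ A
          · have h2 := this hAE
            have : B ^ 2 ≤ (c ^ 2 / 4 * N) ^ 2 := by gcongr
            nlinarith [sq_nonneg A, sq_nonneg B, sq_nonneg (c ^ 2 / 4 * N)]
          · push Not at hAE
            have : A ^ 2 ≤ (c ^ 2 / 4 * N) ^ 2 := by gcongr
            nlinarith [sq_nonneg A, sq_nonneg B, sq_nonneg (c ^ 2 / 4 * N)]
      _ = (c ^ 2 / 4 * N) ^ 2 * ((2 * N : ℕ) * (∑ n ∈ Finset.range N, ‖F n‖ ^ 2 +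
            ∑ n ∈ Finset.range N, ‖G n‖ ^ 2)) := by
          rw [← Finset.mul_sum, Finset.sum_add_distrib, pF, pG]; ring
      _ ≤ _ := by gcongr
  -- lower bound
  have hlow : (2 * N : ℕ) * ((1 / 2) * ((c * N) * (c * N)) ^ 2 / (2 * N)) ≤
      ∑ k ∈ Finset.range (2 * N), ‖trigS N F (2 * Real.pi * k / (2 * N : ℕ)) *
      trigS N G (2 * Real.pi * k / (2 * N : ℕ))‖ ^ 2 := by
    simp only [trigS_mul]
    rw [parseval (2 * N) (2 * N) hM le_rfl]
    gcongr
    set b : ℕ → ℝ := fun y => ∑ p ∈ (Finset.range N ×ˢ Finset.range N) with p.1 + p.2 = y,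
      f p.1 * g p.2 with hb
    have hsum : ∑ y ∈ Finset.range (2 * N), b y =
        (∑ n ∈ Finset.range N, f n) * (∑ n ∈ Finset.range N, g n) := by
      rw [Finset.sum_mul_sum, ← Finset.sum_product', hb]
      refine Finset.sum_fiberwise_of_maps_to (g := fun p : ℕ × ℕ => p.1 + p.2) ?_ _
      intro p hp
      simp only [Finset.mem_product, Finset.mem_range] at hp ⊢
      omega
    have hb2 : ∀ y ∈ Finset.range (2 * N), (1 / 2) * (b y) ^ 2 ≤
      ‖∑ p ∈ (Finset.range N ×ˢ Finset.range N) with p.1 + p.2 = y, F p.1 * G p.2‖ ^ 2 := by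
      intro y _
      have := norm_sq_lower ((Finset.range N ×ˢ Finset.range N).filter (fun p => p.1 + p.2 = y))
        (fun p => f p.1 * g p.2) (fun p => mul_nonneg (hf0 _) (hg0 _)) (fun p => p.2 * v) ?_
      · refine this.trans (le_of_eq ?_)
        congr 2
        refine Finset.sum_congr rfl fun p _ => ?_
        rw [hF, hG]; push_cast; ring
      · intro p hp q hq hp0 hq0
        have e1 := (Finset.mem_filter.1 hp).2
        have e2 := (Finset.mem_filter.1 hq).2
        refine hcos p.1 p.2 q.1 q.2 (e1.trans e2.symm) ?_ ?_ ?_ ?_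
        · exact pos_of_mul_pos_left hp0 (hg0 _)
        · exact pos_of_mul_pos_left hq0 (hg0 _)
        · exact pos_of_mul_pos_right hp0 (hf0 _)
        · exact pos_of_mul_pos_right hq0 (hf0 _)
    refine le_trans ?_ (Finset.sum_le_sum hb2)
    rw [← Finset.mul_sum, mul_div_assoc]
    gcongr
    have cs := sq_sum_le_card_mul_sum_sq (s := Finset.range (2 * N)) (f := b)
    rw [Finset.card_range, hsum] at cs
    rw [div_le_iff₀ (by positivity)]
    have : (c * N) * (c * N) ≤ (∑ n ∈ Finset.range N, f n) * (∑ n ∈ Finset.range N, g n) :=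
      mul_le_mul hfc hgc (by positivity) (Finset.sum_nonneg fun n _ => hf0 n)
    calc (c * N * (c * N)) ^ 2 ≤ ((∑ n ∈ Finset.range N, f n) * (∑ n ∈ Finset.range N, g n)) ^ 2 := by
          gcongr
      _ ≤ _ := cs
      _ = _ := by push_cast; ring
  have := hlow.trans hup
  push_cast at this
  have e1 : 2 * (N : ℝ) * (1 / 2 * (c * N * (c * N)) ^ 2 / (2 * N)) = c ^ 4 * N ^ 4 / 2 := by
    field_simp
  have e2 : (c ^ 2 / 4 * (N : ℝ)) ^ 2 * (2 * N * (N + N)) = c ^ 4 * N ^ 4 / 4 := by ring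
  rw [e1, e2] at this
  have : 0 < c ^ 4 * (N : ℝ) ^ 4 := by positivity
  linarith

lemma freq_bound (N j : ℕ) (f : ℕ → ℝ) (hf0 : ∀ n, 0 ≤ f n) (hf1 : ∀ n, f n ≤ 1) (x e : ℝ)
    (he : ∀ n, |f (n + j) - f n| ≤ e) :
    ‖Complex.exp ((j * x : ℝ) * Complex.I) - 1‖ * ‖trigS N (fun n => f n) x‖ ≤ e * N + 2 * j := by
  set E : ℕ → ℂ := fun n => Complex.exp (-(n * x : ℝ) * Complex.I) with hE
  have hEn : ∀ n, ‖E n‖ = 1 := by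
    intro n
    have : (-((n * x : ℝ) : ℂ) * Complex.I) = ((-(n * x) : ℝ) : ℂ) * Complex.I := by push_cast; ring
    simp only [hE]
    rw [this, Complex.norm_exp_ofReal_mul_I]
  have hfn : ∀ n, ‖(f n : ℂ) * E n‖ ≤ 1 := by
    intro n
    rw [norm_mul, hEn, mul_one, Complex.norm_real, Real.norm_of_nonneg (hf0 n)]; exact hf1 n
  set S := trigS N (fun n => f n) x with hS
  set T : ℂ := ∑ n ∈ Finset.range N, (f (n + j) : ℂ) * E n with hT
  have h1 : E j * T - S = (∑ n ∈ Finset.Ico N (N + j), (f n : ℂ) * E n) - ∑ n ∈ Finset.range j, (f n : ℂ) * E n := by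
    have : E j * T = ∑ n ∈ Finset.Ico j (N + j), (f n : ℂ) * E n := by
      rw [hT, Finset.mul_sum, Finset.sum_Ico_eq_sum_range]
      simp only [Nat.add_sub_cancel]
      refine Finset.sum_congr rfl fun n _ => ?_
      rw [add_comm j n]
      have : E (n + j) = E j * E n := by
        simp only [hE]; rw [← Complex.exp_add]; congr 1; push_cast; ring
      rw [this]; ring
    have e1 := Finset.sum_range_add_sum_Ico (fun n => (f n : ℂ) * E n) (show j ≤ N + j by omega)
    have e2 := Finset.sum_range_add_sum_Ico (fun n => (f n : ℂ) * E n) (show N ≤ N + j by omega)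
    have e3 : S = ∑ n ∈ Finset.range N, (f n : ℂ) * E n := rfl
    rw [this, e3]
    linear_combination e1 - e2
  have h2 : ‖E j * T - S‖ ≤ 2 * j := by
    rw [h1]
    refine (norm_sub_le _ _).trans ?_
    have a1 : ‖∑ n ∈ Finset.Ico N (N + j), (f n : ℂ) * E n‖ ≤ j := by
      refine (norm_sum_le_of_le _ (fun n _ => hfn n)).trans ?_
      simp
    have a2 : ‖∑ n ∈ Finset.range j, (f n : ℂ) * E n‖ ≤ j := by
      refine (norm_sum_le_of_le _ (fun n _ => hfn n)).trans ?_
      simp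
    linarith
  have h3 : ‖T - S‖ ≤ e * N := by
    have e3 : S = ∑ n ∈ Finset.range N, (f n : ℂ) * E n := rfl
    rw [e3, hT, ← Finset.sum_sub_distrib]
    have : ∀ n ∈ Finset.range N, ‖(f (n + j) : ℂ) * E n - (f n : ℂ) * E n‖ ≤ e := by
      intro n _
      rw [← sub_mul, norm_mul, hEn, mul_one, ← Complex.ofReal_sub, Complex.norm_real]
      exact he n
    refine (norm_sum_le_of_le _ this).trans ?_
    simp [mul_comm]
  have h4 : ‖Complex.exp ((j * x : ℝ) * Complex.I) - 1‖ = ‖E j - 1‖ := by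
    have hm : E j * Complex.exp ((j * x : ℝ) * Complex.I) = 1 := by
      simp only [hE]; rw [← Complex.exp_add]; simp
    have : E j - 1 = - (E j * (Complex.exp ((j * x : ℝ) * Complex.I) - 1)) := by
      rw [mul_sub, hm]; ring
    rw [this, norm_neg, norm_mul, hEn, one_mul]
  rw [h4, ← norm_mul]
  have : (E j - 1) * S = (E j * T - S) - E j * (T - S) := by ring
  rw [this]
  refine (norm_sub_le _ _).trans ?_
  rw [norm_mul, hEn, one_mul]
  linarith


/-- totally bounded continuous invariant pseudo-norm on the line -/
structure TBNorm (d : ℝ → ℝ) : Prop where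
  nonneg : ∀ t, 0 ≤ d t
  add : ∀ s t, d (s + t) ≤ d s + d t
  neg : ∀ t, d (-t) = d t
  cont : ∀ ε > 0, ∃ θ > 0, ∀ s, |s| < θ → d s < ε
  dense : ∀ ε > 0, ∃ a > 0, ∀ ξ, ∃ τ, ξ ≤ τ ∧ τ ≤ ξ + a ∧ d τ < ε

/-- bump function -/
noncomputable def bumpN (d : ℝ → ℝ) (η : ℝ) (t : ℝ) : ℝ := max 0 (1 - 2 / η * d t)

lemma bumpN_nonneg (d : ℝ → ℝ) (η : ℝ) (t : ℝ) : 0 ≤ bumpN d η t := le_max_left _ _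

lemma bumpN_le_one {d : ℝ → ℝ} (hd : TBNorm d) {η : ℝ} (hη : 0 < η) (t : ℝ) : bumpN d η t ≤ 1 := by
  unfold bumpN
  have := hd.nonneg t
  have : 0 ≤ 2 / η * d t := by positivity
  exact max_le zero_le_one (by linarith)

lemma bumpN_lip {d : ℝ → ℝ} (hd : TBNorm d) {η : ℝ} (hη : 0 < η) (t s : ℝ) :
    |bumpN d η (t + s) - bumpN d η t| ≤ 2 / η * d s := by
  unfold bumpN
  refine (abs_max_sub_max_le_max _ _ _ _).trans ?_
  have h0 := hd.nonneg s
  have h1 := hd.add t s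
  have h2 : d t ≤ d (t + s) + d s := by
    have := hd.add (t + s) (-s)
    rw [hd.neg, add_neg_cancel_right] at this
    exact this
  refine max_le (by simp; positivity) ?_
  have : (1 - 2 / η * d (t + s) - (1 - 2 / η * d t)) = 2 / η * (d t - d (t + s)) := by ring
  rw [this, abs_mul, abs_of_pos (by positivity : 0 < 2 / η)]
  gcongr
  rw [abs_le]; constructor <;> linarith

lemma bumpN_pos {d : ℝ → ℝ} {η : ℝ} (hη : 0 < η) {t : ℝ} (h : 0 < bumpN d η t) : d t < η / 2 := by
  unfold bumpN at h
  rcases lt_max_iff.1 h with h | h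
  · exact absurd h (lt_irrefl _)
  · have : 2 / η * d t < 1 := by linarith
    rw [div_mul_eq_mul_div, div_lt_one hη] at this
    linarith

lemma bumpN_half {d : ℝ → ℝ} {η : ℝ} (hη : 0 < η) {t : ℝ} (h : d t ≤ η / 4) :
    1 / 2 ≤ bumpN d η t := by
  unfold bumpN
  refine le_max_of_le_right ?_
  have : 2 / η * d t ≤ 2 / η * (η / 4) := by gcongr
  have e : 2 / η * (η / 4) = 1 / 2 := by field_simp; norm_num
  linarith

lemma bump_density {d : ℝ → ℝ} (hd : TBNorm d) {η θ : ℝ} (hη : 0 < η) (hθ : 0 < θ)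
    (h8 : ∀ s, |s| < θ → d s < η / 8) :
    ∃ p0 : ℕ, ∀ p ≥ p0, ∀ q N : ℕ, (N : ℝ) / 2 ≤
      (p + 1) * ∑ n ∈ Finset.range N, bumpN d η (n * (θ / 2 ^ q)) + (p + 1) ^ 2 * 2 ^ q := by
  obtain ⟨a, ha, hrd⟩ := hd.dense (η / 8) (by positivity)
  refine ⟨⌈a / θ⌉₊, fun p hp q N => ?_⟩
  set h := θ / 2 ^ q with hh
  have hp' : a / θ ≤ p := (Nat.le_ceil _).trans (by exact_mod_cast hp)
  have cover : ∀ t : ℝ, 1 / 2 ≤ ∑ i ∈ Finset.range (p + 1), bumpN d η (t + i * θ) := by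
    intro t
    obtain ⟨τ, h1, h2, h3⟩ := hrd t
    have hnn : 0 ≤ (τ - t) / θ := div_nonneg (by linarith) hθ.le
    set i := ⌊(τ - t) / θ⌋₊ with hi
    have hi1 : (i : ℝ) ≤ (τ - t) / θ := Nat.floor_le hnn
    have hi2 : (τ - t) / θ < i + 1 := Nat.lt_floor_add_one _
    rw [le_div_iff₀ hθ] at hi1
    rw [div_lt_iff₀ hθ] at hi2
    have hip : i < p + 1 := by
      have : (i : ℝ) ≤ p := by
        refine le_trans ?_ hp'
        rw [le_div_iff₀ hθ]; linarith
      exact Nat.lt_succ_of_le (by exact_mod_cast this)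
    have hdd : d (t + i * θ) ≤ η / 4 := by
      have e : t + i * θ = τ + (t + i * θ - τ) := by ring
      rw [e]
      refine (hd.add _ _).trans ?_
      have := h8 (t + i * θ - τ) (by rw [abs_lt]; constructor <;> linarith)
      linarith
    refine (bumpN_half hη hdd).trans ?_
    exact Finset.single_le_sum (f := fun i : ℕ => bumpN d η (t + i * θ))
      (fun i _ => bumpN_nonneg _ _ _) (Finset.mem_range.2 hip)
  have shift : ∀ i ∈ Finset.range (p + 1), ∑ n ∈ Finset.range N, bumpN d η (n * h + i * θ) ≤
      ∑ n ∈ Finset.range N, bumpN d η (n * h) + (p + 1) * 2 ^ q := by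
    intro i hi
    set k := i * 2 ^ q with hk
    have e : ∀ n : ℕ, (n : ℝ) * h + i * θ = ((n + k : ℕ) : ℝ) * h := by
      intro n; rw [hh, hk]; push_cast; field_simp
    simp only [e]
    have e1 : ∑ n ∈ Finset.range N, bumpN d η (((n + k : ℕ) : ℝ) * h)
        = ∑ n ∈ Finset.Ico k (N + k), bumpN d η ((n : ℝ) * h) := by
      rw [Finset.sum_Ico_eq_sum_range]
      simp only [Nat.add_sub_cancel]
      refine Finset.sum_congr rfl fun n _ => ?_
      rw [add_comm]
    have e2 := Finset.sum_range_add_sum_Ico (fun n : ℕ => bumpN d η ((n : ℝ) * h)) (show k ≤ N + k by omega)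
    have e3 := Finset.sum_range_add_sum_Ico (fun n : ℕ => bumpN d η ((n : ℝ) * h)) (show N ≤ N + k by omega)
    have e4 : 0 ≤ ∑ n ∈ Finset.range k, bumpN d η ((n : ℝ) * h) :=
      Finset.sum_nonneg fun n _ => bumpN_nonneg _ _ _
    have e5 : ∑ n ∈ Finset.Ico N (N + k), bumpN d η ((n : ℝ) * h) ≤ k := by
      refine (Finset.sum_le_sum fun n _ => bumpN_le_one hd hη _).trans ?_
      simp
    have e6 : (k : ℝ) ≤ (p + 1) * 2 ^ q := by
      rw [hk]; push_cast; gcongr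
      exact_mod_cast (Finset.mem_range.1 hi).le
    rw [e1]; linarith
  calc (N : ℝ) / 2 = ∑ n ∈ Finset.range N, (1 / 2 : ℝ) := by simp; ring
    _ ≤ ∑ n ∈ Finset.range N, ∑ i ∈ Finset.range (p + 1), bumpN d η (n * h + i * θ) :=
        Finset.sum_le_sum fun n _ => cover _
    _ = ∑ i ∈ Finset.range (p + 1), ∑ n ∈ Finset.range N, bumpN d η (n * h + i * θ) := Finset.sum_comm
    _ ≤ ∑ i ∈ Finset.range (p + 1), (∑ n ∈ Finset.range N, bumpN d η (n * h) + (p + 1) * 2 ^ q) :=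
        Finset.sum_le_sum shift
    _ = _ := by rw [Finset.sum_const, Finset.card_range, nsmul_eq_mul]; push_cast; ring

lemma approx_freq {d₁ d₂ : ℝ → ℝ} (h₁ : TBNorm d₁) (h₂ : TBNorm d₂) (lam η : ℝ) (hη : 0 < η)
    (hcos : ∀ τ, d₁ τ < η → d₂ τ < η → 1 / 2 ≤ Real.cos (lam * τ)) :
    ∃ C > 0, ∃ θ > 0, ∀ᶠ q : ℕ in atTop, ∃ x : ℝ, |x| ≤ Real.pi ∧
      (∀ j : ℕ, ‖Complex.exp ((j * x : ℝ) * Complex.I) - 1‖ ≤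
        C * (d₁ (j * (θ / 2 ^ q)) + j / 4 ^ q)) ∧
      (∀ j : ℕ, ‖Complex.exp ((j * (x - θ / 2 ^ q * lam) : ℝ) * Complex.I) - 1‖ ≤
        C * (d₂ (j * (θ / 2 ^ q)) + j / 4 ^ q)) := by
  obtain ⟨θ₁, hθ₁, h8₁⟩ := h₁.cont (η / 8) (by positivity)
  obtain ⟨θ₂, hθ₂, h8₂⟩ := h₂.cont (η / 8) (by positivity)
  set θ := min θ₁ θ₂ with hθdef
  have hθ : 0 < θ := lt_min hθ₁ hθ₂
  obtain ⟨p₁, hp₁⟩ := bump_density h₁ hη hθ (fun s hs => h8₁ s (hs.trans_le (min_le_left _ _)))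
  obtain ⟨p₂, hp₂⟩ := bump_density h₂ hη hθ (fun s hs => h8₂ s (hs.trans_le (min_le_right _ _)))
  set p := max p₁ p₂ with hp
  set c : ℝ := 1 / (4 * (p + 1)) with hc
  have hc0 : 0 < c := by positivity
  set C : ℝ := 4 / c ^ 2 * (2 / η + 2) with hC
  have hC0 : 0 < C := by positivity
  refine ⟨C, hC0, θ, hθ, ?_⟩
  have ev : ∀ᶠ q : ℕ in atTop, (4 * ((p : ℝ) + 1) ^ 2) ≤ 2 ^ q :=
    (tendsto_pow_atTop_atTop_of_one_lt (by norm_num : (1 : ℝ) < 2)).eventually_ge_atTop _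
  filter_upwards [ev] with q hq
  set h := θ / 2 ^ q with hh
  set N : ℕ := 4 ^ q with hN
  have hN0 : 0 < N := by positivity
  have hNr : (N : ℝ) = 2 ^ q * 2 ^ q := by rw [hN]; push_cast; rw [← mul_pow]; norm_num
  have hN0r : (0 : ℝ) < N := by exact_mod_cast hN0
  have low : ∀ S : ℝ, (N : ℝ) / 2 ≤ (p + 1) * S + (p + 1) ^ 2 * 2 ^ q → c * N ≤ S := by
    intro S hS
    have : ((p : ℝ) + 1) ^ 2 * 2 ^ q ≤ N / 4 := by
      rw [hNr]; nlinarith [pow_pos (by norm_num : (0 : ℝ) < 2) q]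
    rw [hc, one_div, inv_mul_le_iff₀ (by positivity)]
    linarith
  have L₁ := low _ (hp₁ p (le_max_left _ _) q N)
  have L₂ := low _ (hp₂ p (le_max_right _ _) q N)
  have fin : ∀ (d : ℝ → ℝ) (hd : TBNorm d) (x : ℝ) (j : ℕ),
      c ^ 2 / 4 * N ≤ ‖trigS N (fun n => (bumpN d η (n * h) : ℝ)) x‖ →
      ‖Complex.exp ((j * x : ℝ) * Complex.I) - 1‖ ≤ C * (d (j * h) + j / 4 ^ q) := by
    intro d hd x j hx
    have fb := freq_bound N j (fun n => bumpN d η (n * h)) (fun n => bumpN_nonneg _ _ _)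
      (fun n => bumpN_le_one hd hη _) x (2 / η * d (j * h)) (by
        intro n
        have := bumpN_lip hd hη (n * h) (j * h)
        rw [← add_mul] at this
        push_cast
        exact this)
    set A := ‖Complex.exp ((j * x : ℝ) * Complex.I) - 1‖
    have hA : 0 ≤ A := norm_nonneg _
    have h1 : A * (c ^ 2 / 4 * N) ≤ 2 / η * d (j * h) * N + 2 * j :=
      (mul_le_mul_of_nonneg_left hx hA).trans fb
    have hd0 := hd.nonneg (j * h)
    have h4 : ((4 : ℝ) ^ q) = N := by rw [hN]; push_cast; rfl
    rw [h4]
    have h2 : A ≤ (2 / η * d (j * h) * N + 2 * j) / (c ^ 2 / 4 * N) := by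
      rw [le_div_iff₀ (by positivity)]; exact h1
    refine h2.trans ?_
    have e : (2 / η * d (j * h) * N + 2 * j) / (c ^ 2 / 4 * N)
        = 4 / c ^ 2 * (2 / η * d (j * h) + 2 * (j / N)) := by field_simp
    rw [e, hC, mul_assoc]
    gcongr
    have : 0 ≤ (j : ℝ) / N := by positivity
    have : 0 < 2 / η := by positivity
    nlinarith [mul_nonneg this.le ‹0 ≤ (j : ℝ) / N›]
  obtain ⟨x, hxpi, hx1, hx2⟩ := find_freq N hN0 (fun n => bumpN d₁ η (n * h)) (fun n => bumpN d₂ η (n * h))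
    (fun n => bumpN_nonneg _ _ _) (fun n => bumpN_le_one h₁ hη _)
    (fun n => bumpN_nonneg _ _ _) (fun n => bumpN_le_one h₂ hη _) (h * lam) c hc0 L₁ L₂ (by
      intro n m n' m' hnm f1 f2 g1 g2
      have f1 := bumpN_pos hη f1
      have f2 := bumpN_pos hη f2
      have g1 := bumpN_pos hη g1
      have g2 := bumpN_pos hη g2
      have e : (m : ℝ) * (h * lam) - m' * (h * lam) = lam * (m * h - m' * h) := by ring
      rw [e]
      apply hcos
      · have hr : (n : ℝ) + m = n' + m' := by exact_mod_cast hnm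
        have : (m : ℝ) * h - m' * h = n' * h + -(n * h) := by linear_combination h * hr
        rw [this]
        refine (h₁.add _ _).trans_lt ?_
        rw [h₁.neg]; linarith
      · rw [sub_eq_add_neg]
        refine (h₂.add _ _).trans_lt ?_
        rw [h₂.neg]; linarith)
  exact ⟨x, hxpi, fun j => fin d₁ h₁ x j hx1, fun j => fin d₂ h₂ _ j hx2⟩


lemma small_freq {h θ₁ x : ℝ} (hh : 0 < h) (hh1 : h ≤ θ₁ / 2) (hθ : 0 < θ₁) (hx : |x| ≤ Real.pi)
    (H : ∀ j : ℕ, j * h < θ₁ → ‖Complex.exp ((j * x : ℝ) * Complex.I) - 1‖ < 1) :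
    |x / h| ≤ 2 * Real.pi / θ₁ := by
  by_contra hcon
  push Not at hcon
  have hpi := Real.pi_pos
  rw [abs_div, abs_of_pos hh, div_lt_div_iff₀ hθ hh] at hcon
  have hx0 : 0 < |x| := by
    by_contra h0
    have : |x| ≤ 0 := not_lt.1 h0
    nlinarith [mul_pos (mul_pos two_pos hpi) hh]
  set j := ⌈(Real.pi / 2) / |x|⌉₊ with hj
  have j1 : (Real.pi / 2) / |x| ≤ j := Nat.le_ceil _
  have j2 : (j : ℝ) < (Real.pi / 2) / |x| + 1 := Nat.ceil_lt_add_one (by positivity)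
  have j1' : Real.pi / 2 ≤ j * |x| := by rwa [div_le_iff₀ hx0] at j1
  have j2' : j * |x| < Real.pi / 2 + |x| := by
    have := mul_lt_mul_of_pos_right j2 hx0
    rwa [add_mul, div_mul_cancel₀ _ hx0.ne', one_mul] at this
  have hjh : j * h < θ₁ := by
    have : (j : ℝ) * h < ((Real.pi / 2) / |x| + 1) * h := mul_lt_mul_of_pos_right j2 hh
    have e : (Real.pi / 2) / |x| * h < θ₁ / 2 := by
      rw [div_mul_eq_mul_div, div_lt_iff₀ hx0]; nlinarith
    nlinarith
  have := H j hjh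
  have hc : Real.cos (j * x) ≤ 0 := by
    rw [← Real.cos_abs, abs_mul, abs_of_nonneg (by positivity : (0 : ℝ) ≤ j)]
    exact Real.cos_nonpos_of_pi_div_two_le_of_le j1' (by linarith)
  have hre := Complex.abs_re_le_norm (Complex.exp ((j * x : ℝ) * Complex.I) - 1)
  rw [Complex.sub_re, Complex.exp_ofReal_mul_I_re, Complex.one_re, abs_of_neg (by linarith)] at hre
  linarith

lemma limit_ineq {d : ℝ → ℝ} (hd : TBNorm d) {C : ℝ} (hC : 0 < C) {h e y : ℕ → ℝ} {a : ℝ}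
    (hpos : ∀ n, 0 < h n) (h0 : Tendsto h atTop (𝓝 0)) (he : Tendsto (fun n => e n / h n) atTop (𝓝 0))
    (he0 : ∀ n, 0 ≤ e n)
    (hy : Tendsto y atTop (𝓝 a))
    (H : ∀ n (j : ℕ), ‖Complex.exp ((j * h n * y n : ℝ) * Complex.I) - 1‖ ≤ C * (d (j * h n) + j * e n))
    (τ : ℝ) : ‖Complex.exp ((a * τ : ℝ) * Complex.I) - 1‖ ≤ C * d τ := by
  have main : ∀ τ : ℝ, 0 ≤ τ → ‖Complex.exp ((a * τ : ℝ) * Complex.I) - 1‖ ≤ C * d τ := by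
    intro τ hτ
    set j : ℕ → ℕ := fun n => ⌊τ / h n⌋₊ with hj
    have j1 : ∀ n, (j n : ℝ) * h n ≤ τ := fun n => by
      have := Nat.floor_le (div_nonneg hτ (hpos n).le)
      rwa [le_div_iff₀ (hpos n)] at this
    have j2 : ∀ n, τ - h n ≤ (j n : ℝ) * h n := fun n => by
      have := Nat.lt_floor_add_one (τ / h n)
      rw [div_lt_iff₀ (hpos n)] at this
      have h3 : τ < ((j n : ℝ) + 1) * h n := this
      linarith
    have jt : Tendsto (fun n => (j n : ℝ) * h n) atTop (𝓝 τ) := by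
      refine tendsto_of_tendsto_of_tendsto_of_le_of_le ?_ tendsto_const_nhds j2 j1
      simpa using tendsto_const_nhds.sub h0
    have st : Tendsto (fun n => d ((j n : ℝ) * h n - τ)) atTop (𝓝 0) := by
      rw [Metric.tendsto_atTop]
      intro ε hε
      obtain ⟨θ, hθ, h1⟩ := hd.cont ε hε
      obtain ⟨n0, hn0⟩ := (Metric.tendsto_atTop.1 jt) θ hθ
      refine ⟨n0, fun n hn => ?_⟩
      have := h1 _ (by have := hn0 n hn; rwa [Real.dist_eq] at this)
      rw [Real.dist_eq, sub_zero, abs_of_nonneg (hd.nonneg _)]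
      exact this
    have et : Tendsto (fun n => τ * (e n / h n)) atTop (𝓝 0) := by
      simpa using he.const_mul τ
    have lt : Tendsto (fun n => ‖Complex.exp ((j n * h n * y n : ℝ) * Complex.I) - 1‖) atTop
        (𝓝 ‖Complex.exp ((a * τ : ℝ) * Complex.I) - 1‖) := by
      have : Tendsto (fun n => (j n : ℝ) * h n * y n) atTop (𝓝 (a * τ)) := by
        rw [mul_comm]; exact jt.mul hy
      have cf : Continuous (fun r : ℝ => ‖Complex.exp ((r : ℝ) * Complex.I) - 1‖) := by fun_prop
      exact (cf.tendsto (a * τ)).comp this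
    have rt : Tendsto (fun n => C * ((d τ + d ((j n : ℝ) * h n - τ)) + τ * (e n / h n))) atTop (𝓝 (C * ((d τ + 0) + 0))) :=
      ((tendsto_const_nhds.add st).add et).const_mul C
    rw [add_zero, add_zero] at rt
    refine le_of_tendsto_of_tendsto' lt rt fun n => (H n (j n)).trans ?_
    have k1 : d (j n * h n) ≤ d τ + d (j n * h n - τ) := by
      have := hd.add τ ((j n : ℝ) * h n - τ)
      rwa [add_sub_cancel] at this
    have k2 : (j n : ℝ) * e n ≤ τ * (e n / h n) := by
      calc (j n : ℝ) * e n = (j n * h n) * (e n / h n) := by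
            have := (hpos n).ne'
            field_simp
        _ ≤ _ := mul_le_mul_of_nonneg_right (j1 n) (div_nonneg (he0 n) (hpos n).le)
    exact mul_le_mul_of_nonneg_left (add_le_add k1 k2) hC.le
  rcases le_total 0 τ with hτ | hτ
  · exact main τ hτ
  · have := main (-τ) (by linarith)
    rw [hd.neg] at this
    refine le_trans (le_of_eq ?_) this
    rw [← Complex.norm_conj, map_sub, ← Complex.exp_conj]
    simp only [map_mul, Complex.conj_I, Complex.conj_ofReal, map_one]
    congr 3
    push_cast; ring

theorem freq_split {d₁ d₂ : ℝ → ℝ} (h₁ : TBNorm d₁) (h₂ : TBNorm d₂) (lam : ℝ)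
    (H : ∀ τ : ℕ → ℝ, Tendsto (fun j => d₁ (τ j)) atTop (𝓝 0) → Tendsto (fun j => d₂ (τ j)) atTop (𝓝 0) →
      Tendsto (fun j => Complex.exp (Complex.I * ((lam * τ j : ℝ) : ℂ))) atTop (𝓝 1)) :
    ∃ a b C : ℝ, lam = a + b ∧ (∀ τ, ‖Complex.exp ((a * τ : ℝ) * Complex.I) - 1‖ ≤ C * d₁ τ) ∧
      (∀ τ, ‖Complex.exp ((b * τ : ℝ) * Complex.I) - 1‖ ≤ C * d₂ τ) := by
  have hη : ∃ η > 0, ∀ τ, d₁ τ < η → d₂ τ < η → 1 / 2 ≤ Real.cos (lam * τ) := by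
    by_contra hcon
    push Not at hcon
    choose τ t1 t2 t3 using fun n : ℕ => hcon (1 / ((n : ℝ) + 1)) Nat.one_div_pos_of_nat
    have lim := H τ
      (squeeze_zero (fun n => h₁.nonneg _) (fun n => (t1 n).le) tendsto_one_div_add_atTop_nhds_zero_nat)
      (squeeze_zero (fun n => h₂.nonneg _) (fun n => (t2 n).le) tendsto_one_div_add_atTop_nhds_zero_nat)
    have lim2 := (Complex.continuous_re.tendsto _).comp lim
    have : ∀ n, (Complex.re ∘ fun j => Complex.exp (Complex.I * ((lam * τ j : ℝ) : ℂ))) n = Real.cos (lam * τ n) := by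
      intro n
      simp only [Function.comp]
      rw [mul_comm, Complex.exp_ofReal_mul_I_re]
    have := le_of_tendsto' lim2 (b := 1 / 2) (fun n => by rw [this]; exact (t3 n).le)
    norm_num at this
  obtain ⟨η, hη0, hη⟩ := hη
  obtain ⟨C, hC, θ, hθ, hev⟩ := approx_freq h₁ h₂ lam η hη0 hη
  obtain ⟨θ₁, hθ₁, hd1⟩ := h₁.cont (1 / (2 * C)) (by positivity)
  have l0 : Tendsto (fun q : ℕ => θ / (2 : ℝ) ^ q) atTop (𝓝 0) :=
    tendsto_const_nhds.div_atTop (tendsto_pow_atTop_atTop_of_one_lt (by norm_num : (1 : ℝ) < 2))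
  have le : Tendsto (fun q : ℕ => (1 / (4 : ℝ) ^ q) / (θ / 2 ^ q)) atTop (𝓝 0) := by
    have e : (fun q : ℕ => (1 / (4 : ℝ) ^ q) / (θ / 2 ^ q)) = fun q : ℕ => (1 / θ) / 2 ^ q := by
      funext q
      have : (4 : ℝ) ^ q = 2 ^ q * 2 ^ q := by rw [← mul_pow]; norm_num
      rw [this]; field_simp
    rw [e]
    exact tendsto_const_nhds.div_atTop (tendsto_pow_atTop_atTop_of_one_lt (by norm_num : (1 : ℝ) < 2))
  have ev1 : ∀ᶠ q : ℕ in atTop, θ / (2 : ℝ) ^ q ≤ θ₁ / 2 := (l0.eventually_lt_const (by positivity)).mono fun _ h => h.le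
  have ev2 : ∀ᶠ q : ℕ in atTop, (1 / (4 : ℝ) ^ q) / (θ / 2 ^ q) ≤ 1 / (2 * C) / θ₁ :=
    (le.eventually_lt_const (by positivity)).mono fun _ h => h.le
  obtain ⟨q0, hq0⟩ := eventually_atTop.1 ((hev.and ev1).and ev2)
  have pick : ∀ n : ℕ, ∃ y : ℝ, |y| ≤ 2 * Real.pi / θ₁ ∧
      (∀ j : ℕ, ‖Complex.exp ((j * (θ / 2 ^ (q0 + n)) * y : ℝ) * Complex.I) - 1‖ ≤
        C * (d₁ (j * (θ / 2 ^ (q0 + n))) + j * (1 / 4 ^ (q0 + n)))) ∧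
      (∀ j : ℕ, ‖Complex.exp ((j * (θ / 2 ^ (q0 + n)) * (y - lam) : ℝ) * Complex.I) - 1‖ ≤
        C * (d₂ (j * (θ / 2 ^ (q0 + n))) + j * (1 / 4 ^ (q0 + n)))) := by
    intro n
    obtain ⟨⟨⟨x, hx, hx1, hx2⟩, hq1⟩, hq2⟩ := hq0 (q0 + n) (by omega)
    set h := θ / (2 : ℝ) ^ (q0 + n) with hh
    have hhpos : 0 < h := by positivity
    refine ⟨x / h, ?_, ?_, ?_⟩
    · refine small_freq hhpos hq1 hθ₁ hx fun j hj => (hx1 j).trans_lt ?_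
      have a1 := hd1 (j * h) (by rw [abs_of_nonneg (by positivity)]; exact hj)
      have a2 : (j : ℝ) / 4 ^ (q0 + n) ≤ 1 / (2 * C) := by
        rw [div_le_iff₀ hhpos] at hq2
        calc (j : ℝ) / 4 ^ (q0 + n) = j * (1 / 4 ^ (q0 + n)) := by ring
          _ ≤ j * (1 / (2 * C) / θ₁ * h) := by gcongr
          _ = (j * h) * (1 / (2 * C) / θ₁) := by ring
          _ ≤ θ₁ * (1 / (2 * C) / θ₁) := by gcongr
          _ = _ := by field_simp
      calc C * (d₁ (j * h) + j / 4 ^ (q0 + n)) < C * (1 / (2 * C) + 1 / (2 * C)) :=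
            mul_lt_mul_of_pos_left (by linarith) hC
        _ = 1 := by field_simp; norm_num
    · intro j
      have e : (j : ℝ) * h * (x / h) = j * x := by field_simp
      rw [e]
      refine (hx1 j).trans (le_of_eq ?_)
      ring
    · intro j
      have e : (j : ℝ) * h * (x / h - lam) = j * (x - h * lam) := by field_simp
      rw [e]
      refine (hx2 j).trans (le_of_eq ?_)
      ring
  choose y yb y1 y2 using pick
  obtain ⟨a, -, φ, hφ, ha⟩ := (isCompact_Icc (a := -(2 * Real.pi / θ₁)) (b := 2 * Real.pi / θ₁)).tendsto_subseq
    (fun n => (abs_le.1 (yb n)))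
  have tq : Tendsto (fun n => q0 + φ n) atTop atTop :=
    tendsto_atTop_mono (fun n => Nat.le_add_left _ _) hφ.tendsto_atTop
  have A := limit_ineq h₁ hC (h := fun n => θ / 2 ^ (q0 + φ n)) (e := fun n => 1 / 4 ^ (q0 + φ n))
    (fun n => by positivity) (l0.comp tq) (le.comp tq) (fun n => by positivity) ha (fun n j => y1 (φ n) j)
  have B := limit_ineq h₂ hC (h := fun n => θ / 2 ^ (q0 + φ n)) (e := fun n => 1 / 4 ^ (q0 + φ n))
    (y := fun n => y (φ n) - lam) (a := a - lam)
    (fun n => by positivity) (l0.comp tq) (le.comp tq) (fun n => by positivity)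
    (ha.sub_const lam) (fun n j => y2 (φ n) j)
  refine ⟨a, lam - a, C, by ring, A, fun τ => ?_⟩
  have := B (-τ)
  rw [h₂.neg] at this
  convert this using 6
  ring

/-- sup of averages over windows of length l -/
noncomputable def avgSup (l : ℝ) (u : ℝ → ℝ≥0∞) : ℝ≥0∞ :=
  ⨆ ξ : ℝ, ENNReal.ofReal (1 / l) * ∫⁻ t in Set.Icc ξ (ξ + l), u t

lemma avgSup_mono {l : ℝ} {u v : ℝ → ℝ≥0∞} (h : ∀ t, u t ≤ v t) : avgSup l u ≤ avgSup l v := by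
  unfold avgSup
  gcongr
  exact h _

lemma avgSup_congr {l : ℝ} {u v : ℝ → ℝ≥0∞} (h : u =ᵐ[volume] v) : avgSup l u = avgSup l v := by
  unfold avgSup
  congr 1
  funext ξ
  congr 1
  exact lintegral_congr_ae (ae_restrict_of_ae h)

lemma avgSup_add {l : ℝ} {u v : ℝ → ℝ≥0∞} (hu : Measurable u) :
    avgSup l (fun t => u t + v t) ≤ avgSup l u + avgSup l v := by
  refine iSup_le fun ξ => ?_
  rw [lintegral_add_left hu, mul_add]
  exact add_le_add (le_iSup (fun ξ => ENNReal.ofReal (1 / l) * ∫⁻ t in Set.Icc ξ (ξ + l), u t) ξ)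
    (le_iSup (fun ξ => ENNReal.ofReal (1 / l) * ∫⁻ t in Set.Icc ξ (ξ + l), v t) ξ)

lemma lint_shift (u : ℝ → ℝ≥0∞) (a b s : ℝ) :
    ∫⁻ t in Set.Icc a b, u (t + s) = ∫⁻ t in Set.Icc (a + s) (b + s), u t := by
  rw [← lintegral_indicator measurableSet_Icc, ← lintegral_indicator measurableSet_Icc]
  rw [← lintegral_add_right_eq_self (Set.indicator (Set.Icc (a + s) (b + s)) u) s]
  congr 1
  funext t
  simp [Set.indicator, Set.mem_Icc]

lemma avgSup_shift (l s : ℝ) (u : ℝ → ℝ≥0∞) : avgSup l (fun t => u (t + s)) = avgSup l u := by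
  unfold avgSup
  simp_rw [lint_shift]
  refine le_antisymm (iSup_le fun ξ => ?_) (iSup_le fun ξ => ?_)
  · have := le_iSup (fun ξ => ENNReal.ofReal (1 / l) * ∫⁻ t in Set.Icc ξ (ξ + l), u t) (ξ + s)
    refine le_trans (le_of_eq ?_) this
    simp only [add_right_comm]
  · have := le_iSup (fun ξ => ENNReal.ofReal (1 / l) * ∫⁻ t in Set.Icc (ξ + s) (ξ + l + s), u t) (ξ - s)
    refine le_trans (le_of_eq ?_) this
    congr 4 <;> ring

lemma lint_le_avgSup {l : ℝ} (hl : 0 < l) (u : ℝ → ℝ≥0∞) (ξ : ℝ) :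
    ∫⁻ t in Set.Icc ξ (ξ + l), u t ≤ ENNReal.ofReal l * avgSup l u := by
  have := le_iSup (fun ξ => ENNReal.ofReal (1 / l) * ∫⁻ t in Set.Icc ξ (ξ + l), u t) ξ
  calc ∫⁻ t in Set.Icc ξ (ξ + l), u t
      = ENNReal.ofReal l * (ENNReal.ofReal (1 / l) * ∫⁻ t in Set.Icc ξ (ξ + l), u t) := by
        rw [← mul_assoc, ← ENNReal.ofReal_mul hl.le, mul_one_div_cancel hl.ne']; simp
    _ ≤ _ := by gcongr; exact this

lemma avgSup_le {l : ℝ} (hl : 0 < l) {u : ℝ → ℝ≥0∞} {c : ℝ≥0∞}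
    (h : ∀ ξ, ∫⁻ t in Set.Icc ξ (ξ + l), u t ≤ ENNReal.ofReal l * c) : avgSup l u ≤ c := by
  refine iSup_le fun ξ => ?_
  calc _ ≤ ENNReal.ofReal (1 / l) * (ENNReal.ofReal l * c) := by gcongr; exact h ξ
    _ = c := by
        rw [← mul_assoc, ← ENNReal.ofReal_mul (by positivity), one_div_mul_cancel hl.ne']; simp

lemma avgSup_const_le {l : ℝ} (hl : 0 < l) (c : ℝ≥0∞) : avgSup l (fun _ => c) ≤ c := by
  refine avgSup_le hl fun ξ => ?_
  simp [mul_comm]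

lemma avgSup_const_mul {l : ℝ} (c : ℝ≥0∞) (hc : c ≠ ∞) (u : ℝ → ℝ≥0∞) :
    avgSup l (fun t => c * u t) = c * avgSup l u := by
  unfold avgSup
  simp_rw [lintegral_const_mul' c _ hc, ENNReal.mul_iSup]
  congr 1; funext ξ; ring

lemma lint_blocks (u : ℝ → ℝ≥0∞) (ξ l : ℝ) (hl : 0 < l) (N : ℕ) :
    ∫⁻ t in Set.Icc ξ (ξ + N * l), u t ≤ N * (ENNReal.ofReal l * avgSup l u) := by
  induction N with
  | zero => simp
  | succ N ih =>
    have hsub : Set.Icc ξ (ξ + ((N + 1 : ℕ) : ℝ) * l) ⊆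
        Set.Icc ξ (ξ + N * l) ∪ Set.Icc (ξ + N * l) (ξ + N * l + l) := by
      intro t ht
      rcases le_total t (ξ + N * l) with h | h
      · exact Or.inl ⟨ht.1, h⟩
      · refine Or.inr ⟨h, ht.2.trans ?_⟩
        push_cast; linarith
    calc _ ≤ ∫⁻ t in Set.Icc ξ (ξ + N * l) ∪ Set.Icc (ξ + N * l) (ξ + N * l + l), u t :=
          lintegral_mono_set hsub
      _ ≤ _ := lintegral_union_le _ _ _
      _ ≤ N * (ENNReal.ofReal l * avgSup l u) + ENNReal.ofReal l * avgSup l u :=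
          add_le_add ih (lint_le_avgSup hl u _)
      _ = _ := by push_cast; ring

lemma avgSup_le_two {l L : ℝ} (hl : 0 < l) (hL : l ≤ L) (u : ℝ → ℝ≥0∞) :
    avgSup L u ≤ 2 * avgSup l u := by
  have hL0 : 0 < L := hl.trans_le hL
  refine avgSup_le hL0 fun ξ => ?_
  set N := ⌈L / l⌉₊
  have h1 : L ≤ N * l := by
    have := Nat.le_ceil (L / l)
    rwa [div_le_iff₀ hl] at this
  have h2 : N * l ≤ 2 * L := by
    have := (Nat.ceil_lt_add_one (by positivity : 0 ≤ L / l)).le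
    have h3 := mul_le_mul_of_nonneg_right this hl.le
    rw [add_mul, div_mul_cancel₀ _ hl.ne'] at h3
    change N * l ≤ _ at h3
    linarith
  calc ∫⁻ t in Set.Icc ξ (ξ + L), u t ≤ ∫⁻ t in Set.Icc ξ (ξ + N * l), u t :=
        lintegral_mono_set (Set.Icc_subset_Icc_right (by linarith))
    _ ≤ N * (ENNReal.ofReal l * avgSup l u) := lint_blocks u ξ l hl N
    _ = ENNReal.ofReal (N * l) * avgSup l u := by
        rw [ENNReal.ofReal_mul (by positivity), ENNReal.ofReal_natCast, mul_assoc]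
    _ ≤ ENNReal.ofReal (2 * L) * avgSup l u := by gcongr
    _ = _ := by
        rw [ENNReal.ofReal_mul (by norm_num)]; simp; ring

section
variable {X : Type*} [MetricSpace X]

lemma bdist_nonneg (x y : X) : 0 ≤ bdist x y := le_min zero_le_one dist_nonneg
lemma bdist_le_one (x y : X) : bdist x y ≤ 1 := min_le_left _ _
lemma bdist_le_dist (x y : X) : bdist x y ≤ dist x y := min_le_right _ _
lemma bdist_comm (x y : X) : bdist x y = bdist y x := by unfold bdist; rw [dist_comm]
lemma bdist_triangle (x y w : X) : bdist x w ≤ bdist x y + bdist y w := by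
  have h := dist_triangle x y w
  have h1 := @dist_nonneg _ _ x y
  have h2 := @dist_nonneg _ _ y w
  unfold bdist
  rcases le_total 1 (dist x y) with a | a
  · rw [min_eq_left a]
    exact (min_le_left _ _).trans (by have := le_min zero_le_one h2; linarith)
  · rcases le_total 1 (dist y w) with b | b
    · rw [min_eq_left b]
      exact (min_le_left _ _).trans (by have := le_min zero_le_one h1; linarith)
    · rw [min_eq_right a, min_eq_right b]
      exact (min_le_right _ _).trans h

/-- the local shift difference -/
noncomputable def dE (h : ℝ → X) (s t : ℝ) : ℝ≥0∞ := ENNReal.ofReal (bdist (h t) (h (t + s)))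

/-- the Weyl shift difference with window l -/
noncomputable def eW (h : ℝ → X) (l s : ℝ) : ℝ≥0∞ := avgSup l (dE h s)

lemma weylD_eq (h : ℝ → X) (l s : ℝ) : weylD bdist 1 l h (fun t => h (t + s)) = eW h l s := by
  unfold weylD eW avgSup dE
  simp

lemma dE_meas {h : ℝ → X} (hh : StronglyMeasurable h) (s : ℝ) : Measurable (dE h s) := by
  have := (hh.dist (hh.comp_measurable (measurable_add_const s))).measurable
  exact (measurable_const.min this).ennreal_ofReal

lemma dE_le_one (h : ℝ → X) (s t : ℝ) : dE h s t ≤ 1 := by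
  unfold dE
  exact ENNReal.ofReal_le_one.2 (bdist_le_one _ _)

lemma eW_le_one (h : ℝ → X) {l : ℝ} (hl : 0 < l) (s : ℝ) : eW h l s ≤ 1 :=
  (avgSup_mono (dE_le_one h s)).trans (avgSup_const_le hl 1)

lemma eW_add {h : ℝ → X} (hh : StronglyMeasurable h) (l s s' : ℝ) :
    eW h l (s + s') ≤ eW h l s + eW h l s' := by
  have : ∀ t, dE h (s + s') t ≤ dE h s t + dE h s' (t + s) := fun t => by
    unfold dE
    rw [← ENNReal.ofReal_add (bdist_nonneg _ _) (bdist_nonneg _ _), ← add_assoc]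
    exact ENNReal.ofReal_le_ofReal (bdist_triangle _ _ _)
  refine (avgSup_mono this).trans ((avgSup_add (dE_meas hh s)).trans ?_)
  rw [avgSup_shift]; rfl

lemma eW_neg (h : ℝ → X) (l s : ℝ) : eW h l (-s) = eW h l s := by
  unfold eW
  rw [← avgSup_shift l s (dE h (-s))]
  congr 1
  funext t
  unfold dE
  rw [bdist_comm, add_neg_cancel_right]

lemma eW_two (h : ℝ → X) {l L : ℝ} (hl : 0 < l) (hL : l ≤ L) (s : ℝ) : eW h L s ≤ 2 * eW h l s :=
  avgSup_le_two hl hL _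

/-- uniform version of Weyl almost periodicity -/
def WP (h : ℝ → X) : Prop := ∀ ε > 0, ∃ l > 0, ∃ a > 0, ∀ ξ : ℝ, ∃ τ, ξ ≤ τ ∧ τ ≤ ξ + a ∧
  ∀ L ≥ l, eW h L τ ≤ ENNReal.ofReal ε

lemma WP_of {h : ℝ → X} (H : ∀ ε > 0, ∃ l > 0, RelDense (APeriodsL bdist 1 l ε h)) : WP h := by
  intro ε hε
  obtain ⟨l, hl, a, ha, H⟩ := H (ε / 2) (by positivity)
  refine ⟨l, hl, a, ha, fun ξ => ?_⟩
  obtain ⟨τ, h1, h2⟩ := H ξ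
  refine ⟨τ, h1.1, h1.2, fun L hL => (eW_two h hl hL τ).trans ?_⟩
  have h3 : weylD bdist 1 l h (fun t => h (t + τ)) < ENNReal.ofReal (ε / 2) := h2
  rw [weylD_eq] at h3
  calc 2 * eW h l τ ≤ 2 * ENNReal.ofReal (ε / 2) := by gcongr
    _ = ENNReal.ofReal (2 * (ε / 2)) := by rw [ENNReal.ofReal_mul (by norm_num)]; simp
    _ = _ := by congr 1; ring

lemma of_WP {h : ℝ → X} (H : WP h) : ∀ ε > 0, ∃ l > 0, RelDense (APeriodsL bdist 1 l ε h) := by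
  intro ε hε
  obtain ⟨l, hl, a, ha, H⟩ := H (ε / 2) (by positivity)
  refine ⟨l, hl, a, ha, fun ξ => ?_⟩
  obtain ⟨τ, h1, h2, h3⟩ := H ξ
  refine ⟨τ, ⟨h1, h2⟩, ?_⟩
  change weylD bdist 1 l h (fun t => h (t + τ)) < ENNReal.ofReal ε
  rw [weylD_eq]
  refine (h3 l le_rfl).trans_lt ?_
  rw [ENNReal.ofReal_lt_ofReal_iff hε]; linarith

/-- compression of averages of Lipschitz observables -/
lemma WP_compress {h : ℝ → X} (hh : StronglyMeasurable h) (H : WP h) (ε : ℝ) (hε : 0 < ε) :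
    ∃ l > 0, ∃ a > 0, ∀ (Ψ : X → ℝ≥0∞) (K : ℝ≥0∞), K ≠ ∞ →
      (∀ x y, Ψ x ≤ Ψ y + K * ENNReal.ofReal (bdist x y)) → ∀ L ≥ l,
      avgSup L (fun t => Ψ (h t)) ≤
        ENNReal.ofReal (1 / L) * (∫⁻ t in Set.Icc 0 (a + L), Ψ (h t)) + K * ENNReal.ofReal ε := by
  obtain ⟨l, hl, a, ha, H⟩ := H ε hε
  refine ⟨l, hl, a, ha, fun Ψ K hK hΨ L hL => ?_⟩
  have hL0 : 0 < L := lt_of_lt_of_le hl hL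
  refine iSup_le fun ξ => ?_
  obtain ⟨τ, h1, h2, h3⟩ := H (-ξ)
  have b1 : ∫⁻ t in Set.Icc ξ (ξ + L), Ψ (h t) ≤
      (∫⁻ t in Set.Icc 0 (a + L), Ψ (h t)) + K * ∫⁻ t in Set.Icc ξ (ξ + L), dE h τ t := by
    calc ∫⁻ t in Set.Icc ξ (ξ + L), Ψ (h t)
        ≤ ∫⁻ t in Set.Icc ξ (ξ + L), (Ψ (h (t + τ)) + K * dE h τ t) := by
          gcongr; exact hΨ _ _
      _ = (∫⁻ t in Set.Icc ξ (ξ + L), Ψ (h (t + τ))) + ∫⁻ t in Set.Icc ξ (ξ + L), K * dE h τ t := by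
          rw [lintegral_add_right _ ((dE_meas hh τ).const_mul K)]
      _ ≤ _ := by
          rw [lintegral_const_mul' K _ hK, lint_shift (fun t => Ψ (h t))]
          gcongr ?_ + _
          exact lintegral_mono_set (Set.Icc_subset_Icc (by linarith) (by linarith))
  calc _ ≤ ENNReal.ofReal (1 / L) * ((∫⁻ t in Set.Icc 0 (a + L), Ψ (h t)) +
        K * ∫⁻ t in Set.Icc ξ (ξ + L), dE h τ t) := by gcongr
    _ = ENNReal.ofReal (1 / L) * (∫⁻ t in Set.Icc 0 (a + L), Ψ (h t)) +
        K * (ENNReal.ofReal (1 / L) * ∫⁻ t in Set.Icc ξ (ξ + L), dE h τ t) := by ring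
    _ ≤ _ := by
        gcongr
        exact (le_iSup (fun ξ => ENNReal.ofReal (1 / L) * ∫⁻ t in Set.Icc ξ (ξ + L), dE h τ t) ξ).trans
          (h3 L hL)

end

section
variable {X : Type*} [MetricSpace X]

/-- truncated distance to the first points of a sequence -/
noncomputable def psiJ (z : ℕ → X) (J : ℕ) (x : X) : ℝ≥0∞ :=
  ⨅ i : Fin (J + 1), ENNReal.ofReal (bdist x (z i))

lemma ofReal_bdist_triangle (x y w : X) : ENNReal.ofReal (bdist x w) ≤
    ENNReal.ofReal (bdist x y) + ENNReal.ofReal (bdist y w) := by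
  rw [← ENNReal.ofReal_add (bdist_nonneg _ _) (bdist_nonneg _ _)]
  exact ENNReal.ofReal_le_ofReal (bdist_triangle _ _ _)

lemma psiJ_lip (z : ℕ → X) (J : ℕ) (x y : X) :
    psiJ z J x ≤ psiJ z J y + ENNReal.ofReal (bdist x y) := by
  unfold psiJ
  rw [ENNReal.iInf_add]
  refine le_iInf fun i => (iInf_le _ i).trans ?_
  rw [add_comm (ENNReal.ofReal _)]
  exact ofReal_bdist_triangle _ _ _

lemma psiJ_le_one (z : ℕ → X) (J : ℕ) (x : X) : psiJ z J x ≤ 1 :=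
  (iInf_le _ 0).trans (ENNReal.ofReal_le_one.2 (bdist_le_one _ _))

lemma phi_meas {h : ℝ → X} (hh : StronglyMeasurable h) (w : X) :
    Measurable (fun t => bdist (h t) w) :=
  measurable_const.min (hh.dist stronglyMeasurable_const).measurable

lemma psiJ_meas {h : ℝ → X} (hh : StronglyMeasurable h) (z : ℕ → X) (J : ℕ) :
    Measurable (fun t => psiJ z J (h t)) :=
  Measurable.iInf fun _ => (phi_meas hh _).ennreal_ofReal

lemma psiJ_int {h : ℝ → X} (hh : StronglyMeasurable h) (z : ℕ → X)
    (hz : ∀ t, ∀ ε > 0, ∃ k, dist (h t) (z k) < ε) (R : ℝ) :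
    Tendsto (fun J => ∫⁻ t in Set.Icc 0 R, psiJ z J (h t)) atTop (𝓝 0) := by
  have := tendsto_lintegral_of_dominated_convergence (μ := volume.restrict (Set.Icc 0 R))
    (F := fun J t => psiJ z J (h t)) (f := fun _ => 0) (fun _ => 1)
    (fun J => psiJ_meas hh z J) (fun J => Eventually.of_forall fun t => psiJ_le_one _ _ _)
    (by simp) (Eventually.of_forall fun t => ?_)
  · simpa using this
  · rw [ENNReal.tendsto_atTop_zero]
    intro ε hε
    by_cases hε' : ε = ∞
    · exact ⟨0, fun n _ => by rw [hε']; exact le_top⟩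
    obtain ⟨k, hk⟩ := hz t ε.toReal (ENNReal.toReal_pos hε.ne' hε')
    refine ⟨k, fun n hn => (iInf_le _ (⟨k, by omega⟩ : Fin (n + 1))).trans ?_⟩
    exact ENNReal.ofReal_le_of_le_toReal ((bdist_le_dist _ _).trans hk.le)

/-- continuity of translations in mean for bounded measurable functions -/
lemma real_trans_cont {φ : ℝ → ℝ} (hφ : Measurable φ) (hb : ∀ t, |φ t| ≤ 1) (R : ℝ) (hR : 0 ≤ R)
    (ε : ℝ) (hε : 0 < ε) :
    ∃ θ > 0, ∀ s, |s| < θ →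
      ∫⁻ t in Set.Icc 0 R, ENNReal.ofReal |φ (t + s) - φ t| ≤ ENNReal.ofReal ε := by
  set F := Set.indicator (Set.Icc (-1) (R + 1)) φ with hF
  have hFm : Measurable F := hφ.indicator measurableSet_Icc
  have hFi : Integrable F := by
    refine (integrable_indicator_iff measurableSet_Icc).2 ?_
    refine Measure.integrableOn_of_bounded (M := 1) (by simp) hφ.aestronglyMeasurable ?_
    exact Eventually.of_forall fun t => hb t
  obtain ⟨G, hGc, hG, hGcont, hGi⟩ := hFi.exists_hasCompactSupport_lintegral_sub_le
    (ε := ENNReal.ofReal (ε / 3)) (by simpa using by positivity)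
  have huc := hGcont.uniformContinuous_of_tendsto_cocompact (x := 0) hGc.is_zero_at_infty
  rw [Metric.uniformContinuous_iff] at huc
  obtain ⟨θ, hθ, hu⟩ := huc (ε / 3 / (R + 1)) (by positivity)
  refine ⟨min θ 1, by positivity, fun s hs => ?_⟩
  have hs1 : |s| < θ := hs.trans_le (min_le_left _ _)
  have hs2 : |s| < 1 := hs.trans_le (min_le_right _ _)
  have hs3 := abs_lt.1 hs2
  have hm : Measurable (fun t => ‖F t - G t‖ₑ) := (hFm.sub hGcont.measurable).enorm
  have key : ∀ t ∈ Set.Icc 0 R, ENNReal.ofReal |φ (t + s) - φ t| ≤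
      (‖F (t + s) - G (t + s)‖ₑ + ‖F t - G t‖ₑ) + ENNReal.ofReal (ε / 3 / (R + 1)) := by
    intro t ht
    have e1 : F t = φ t := Set.indicator_of_mem (Set.mem_Icc.2 ⟨by linarith [ht.1], by linarith [ht.2]⟩) _
    have e2 : F (t + s) = φ (t + s) := Set.indicator_of_mem (Set.mem_Icc.2 ⟨by linarith [ht.1], by linarith [ht.2]⟩) _
    have e3 : |G (t + s) - G t| ≤ ε / 3 / (R + 1) := by
      have := @hu (t + s) t (by rw [Real.dist_eq]; simpa using hs1)
      rw [Real.dist_eq] at this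
      exact this.le
    rw [← ofReal_norm, ← ofReal_norm, ← ENNReal.ofReal_add (by positivity) (by positivity),
      ← ENNReal.ofReal_add (by positivity) (by positivity), ← e1, ← e2]
    apply ENNReal.ofReal_le_ofReal
    rw [Real.norm_eq_abs, Real.norm_eq_abs]
    calc |F (t + s) - F t| = |(F (t + s) - G (t + s)) + -(F t - G t) + (G (t + s) - G t)| := by
          congr 1; ring
      _ ≤ |F (t + s) - G (t + s)| + |-(F t - G t)| + |G (t + s) - G t| := abs_add_three _ _ _
      _ ≤ _ := by rw [abs_neg]; gcongr
  calc _ ≤ ∫⁻ t in Set.Icc 0 R, ((‖F (t + s) - G (t + s)‖ₑ + ‖F t - G t‖ₑ) +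
        ENNReal.ofReal (ε / 3 / (R + 1))) := setLIntegral_mono' measurableSet_Icc key
    _ = (∫⁻ t in Set.Icc 0 R, ‖F (t + s) - G (t + s)‖ₑ) + (∫⁻ t in Set.Icc 0 R, ‖F t - G t‖ₑ) +
        ENNReal.ofReal (ε / 3 / (R + 1)) * ENNReal.ofReal R := by
        rw [lintegral_add_right _ measurable_const, lintegral_add_right _ hm]
        simp
    _ ≤ ENNReal.ofReal (ε / 3) + ENNReal.ofReal (ε / 3) + ENNReal.ofReal (ε / 3) := by
        gcongr
        · rw [lint_shift (fun t => ‖F t - G t‖ₑ)]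
          exact (setLIntegral_le_lintegral _ _).trans hG
        · exact (setLIntegral_le_lintegral _ _).trans hG
        · rw [← ENNReal.ofReal_mul (by positivity)]
          apply ENNReal.ofReal_le_ofReal
          rw [div_mul_eq_mul_div, div_le_iff₀ (by positivity)]
          nlinarith
    _ = _ := by
        rw [← ENNReal.ofReal_add (by positivity) (by positivity),
          ← ENNReal.ofReal_add (by positivity) (by positivity)]
        congr 1; ring

lemma exists_dense_seq {h : ℝ → X} (hh : StronglyMeasurable h) :
    ∃ z : ℕ → X, ∀ t, ∀ ε > 0, ∃ k, dist (h t) (z k) < ε := by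
  obtain ⟨c, hc, hcl⟩ := hh.isSeparable_range
  have hne : c.Nonempty := by
    have : h 0 ∈ closure c := hcl ⟨0, rfl⟩
    exact closure_nonempty_iff.1 ⟨_, this⟩
  obtain ⟨z, hz⟩ := hc.exists_eq_range hne
  refine ⟨z, fun t ε hε => ?_⟩
  have : h t ∈ closure c := hcl ⟨t, rfl⟩
  obtain ⟨b, hb, hd⟩ := Metric.mem_closure_iff.1 this ε hε
  rw [hz] at hb
  obtain ⟨k, rfl⟩ := hb
  exact ⟨k, hd⟩

lemma trans_cont {h : ℝ → X} (hh : StronglyMeasurable h) (R : ℝ) (hR : 0 ≤ R) (ε : ℝ) (hε : 0 < ε) :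
    ∃ θ > 0, ∀ s, |s| < θ → ∫⁻ t in Set.Icc 0 R, dE h s t ≤ ENNReal.ofReal ε := by
  obtain ⟨z, hz⟩ := exists_dense_seq hh
  have h1 := (ENNReal.tendsto_atTop_zero.1 (psiJ_int hh z hz R)) (ENNReal.ofReal (ε / 4))
    (by simpa using by positivity)
  obtain ⟨J, hJ⟩ := h1
  have hJ := hJ J le_rfl
  choose θ hθ0 hθ using fun i : Fin (J + 1) => real_trans_cont (phi_meas hh (z i))
    (fun t => by rw [abs_of_nonneg (bdist_nonneg _ _)]; exact bdist_le_one _ _) R hR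
    (ε / 2 / (J + 1)) (by positivity)
  obtain ⟨θ', hθ', hle⟩ : ∃ θ' > 0, ∀ i, θ' ≤ θ i := by
    obtain ⟨i0, hi0⟩ := Finite.exists_min θ
    exact ⟨θ i0, hθ0 i0, hi0⟩
  refine ⟨θ', hθ', fun s hs => ?_⟩
  have key : ∀ t, dE h s t ≤ 2 * psiJ z J (h t) +
      ∑ i : Fin (J + 1), ENNReal.ofReal |bdist (h (t + s)) (z i) - bdist (h t) (z i)| := by
    intro t
    obtain ⟨i, hi⟩ := exists_eq_ciInf_of_finite (f := fun i : Fin (J + 1) => ENNReal.ofReal (bdist (h t) (z i)))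
    have hi' : psiJ z J (h t) = ENNReal.ofReal (bdist (h t) (z i)) := hi.symm
    rw [hi']
    calc dE h s t ≤ ENNReal.ofReal (2 * bdist (h t) (z i) +
          |bdist (h (t + s)) (z i) - bdist (h t) (z i)|) := by
          apply ENNReal.ofReal_le_ofReal
          have := bdist_triangle (h t) (z i) (h (t + s))
          rw [bdist_comm (z i)] at this
          have h2 := le_abs_self (bdist (h (t + s)) (z i) - bdist (h t) (z i))
          linarith
      _ = 2 * ENNReal.ofReal (bdist (h t) (z i)) +
          ENNReal.ofReal |bdist (h (t + s)) (z i) - bdist (h t) (z i)| := by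
          rw [ENNReal.ofReal_add (by have := bdist_nonneg (h t) (z i); positivity) (abs_nonneg _),
            ENNReal.ofReal_mul (by norm_num)]
          simp
      _ ≤ _ := by
          gcongr
          exact Finset.single_le_sum (f := fun i : Fin (J + 1) =>
            ENNReal.ofReal |bdist (h (t + s)) (z i) - bdist (h t) (z i)|) (fun _ _ => zero_le) (Finset.mem_univ i)
  have hmm : ∀ i : Fin (J + 1), Measurable (fun t =>
      ENNReal.ofReal |bdist (h (t + s)) (z i) - bdist (h t) (z i)|) := fun i =>
    ((((phi_meas hh (z i)).comp (measurable_add_const s)).sub (phi_meas hh (z i))).abs).ennreal_ofReal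
  calc _ ≤ ∫⁻ t in Set.Icc 0 R, (2 * psiJ z J (h t) +
      ∑ i : Fin (J + 1), ENNReal.ofReal |bdist (h (t + s)) (z i) - bdist (h t) (z i)|) :=
        lintegral_mono key
    _ = 2 * (∫⁻ t in Set.Icc 0 R, psiJ z J (h t)) + ∑ i : Fin (J + 1), ∫⁻ t in Set.Icc 0 R,
        ENNReal.ofReal |bdist (h (t + s)) (z i) - bdist (h t) (z i)| := by
        rw [lintegral_add_left ((psiJ_meas hh z J).const_mul 2), lintegral_const_mul' _ _ (by simp),
          lintegral_finsetSum _ (fun i _ => hmm i)]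
    _ ≤ 2 * ENNReal.ofReal (ε / 4) + ∑ i : Fin (J + 1), ENNReal.ofReal (ε / 2 / (J + 1)) := by
        gcongr with i
        exact hθ i s (hs.trans_le (hle i))
    _ = ENNReal.ofReal ε := by
        rw [Finset.sum_const, Finset.card_univ, Fintype.card_fin, nsmul_eq_mul,
          ← ENNReal.ofReal_natCast, ← ENNReal.ofReal_mul (by positivity), ← ENNReal.ofReal_ofNat,
          ← ENNReal.ofReal_mul (by norm_num), ← ENNReal.ofReal_add (by positivity) (by positivity)]
        congr 1
        push_cast
        field_simp
        norm_num

lemma WP_cont {h : ℝ → X} (hh : StronglyMeasurable h) (H : WP h) (ε : ℝ) (hε : 0 < ε) :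
    ∃ l > 0, ∃ θ > 0, ∀ s, |s| < θ → ∀ L ≥ l, eW h L s ≤ ENNReal.ofReal ε := by
  obtain ⟨l, hl, a, ha, H⟩ := H (ε / 6) (by positivity)
  obtain ⟨θ, hθ, hT⟩ := trans_cont hh (a + l) (by positivity) (ε / 6 * l) (by positivity)
  refine ⟨l, hl, θ, hθ, fun s hs L hL => (eW_two h hl hL s).trans ?_⟩
  suffices eW h l s ≤ ENNReal.ofReal (ε / 2) by
    calc 2 * eW h l s ≤ 2 * ENNReal.ofReal (ε / 2) := by gcongr
      _ = ENNReal.ofReal (2 * (ε / 2)) := by rw [ENNReal.ofReal_mul (by norm_num)]; simp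
      _ = _ := by congr 1; ring
  refine avgSup_le hl fun ξ => ?_
  obtain ⟨τ, h1, h2, h3⟩ := H (-ξ)
  have h3 := h3 l le_rfl
  have key : ∀ t, dE h s t ≤ (dE h τ t + dE h τ (t + s)) + dE h s (t + τ) := by
    intro t
    have k1 := ofReal_bdist_triangle (h t) (h (t + τ)) (h (t + s))
    have k2 := ofReal_bdist_triangle (h (t + τ)) (h (t + τ + s)) (h (t + s))
    rw [bdist_comm (h (t + τ + s)), add_right_comm t τ s] at k2
    unfold dE
    rw [add_right_comm t τ s]
    calc _ ≤ _ := k1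
      _ ≤ _ := add_le_add_right k2 _
      _ = _ := by ring
  have hm := dE_meas hh τ
  have hm2 : Measurable (fun t => dE h τ t + dE h τ (t + s)) :=
    hm.add (hm.comp (measurable_add_const s))
  calc _ ≤ ∫⁻ t in Set.Icc ξ (ξ + l), ((dE h τ t + dE h τ (t + s)) + dE h s (t + τ)) := lintegral_mono key
    _ = (∫⁻ t in Set.Icc ξ (ξ + l), dE h τ t) + (∫⁻ t in Set.Icc ξ (ξ + l), dE h τ (t + s)) +
        ∫⁻ t in Set.Icc ξ (ξ + l), dE h s (t + τ) := by
        rw [lintegral_add_left hm2, lintegral_add_left hm]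
    _ ≤ ENNReal.ofReal l * ENNReal.ofReal (ε / 6) + ENNReal.ofReal l * ENNReal.ofReal (ε / 6) +
        ENNReal.ofReal (ε / 6 * l) := by
        gcongr
        · exact (lint_le_avgSup hl _ _).trans (by gcongr; exact h3)
        · rw [lint_shift (dE h τ), add_right_comm]
          exact (lint_le_avgSup hl _ _).trans (by gcongr; exact h3)
        · rw [lint_shift (dE h s)]
          refine le_trans (lintegral_mono_set (Set.Icc_subset_Icc ?_ ?_)) (hT s hs) <;> linarith
    _ = _ := by
        rw [← ENNReal.ofReal_mul hl.le, ← ENNReal.ofReal_mul hl.le,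
          ← ENNReal.ofReal_add (by positivity) (by positivity),
          ← ENNReal.ofReal_add (by positivity) (by positivity)]
        congr 1; ring

end

lemma limsup_add_le_enn (u v : ℝ → ℝ≥0∞) :
    limsup (fun l => u l + v l) atTop ≤ limsup u atTop + limsup v atTop := by
  refine ENNReal.le_of_forall_pos_le_add fun ε hε hlt => ?_
  have h1 : limsup u atTop < limsup u atTop + (ε / 2 : NNReal) := by
    refine ENNReal.lt_add_right (ne_top_of_le_ne_top hlt.ne le_self_add) ?_
    simpa using hε.ne'
  have h2 : limsup v atTop < limsup v atTop + (ε / 2 : NNReal) := by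
    refine ENNReal.lt_add_right (ne_top_of_le_ne_top hlt.ne le_add_self) ?_
    simpa using hε.ne'
  refine limsup_le_of_le (by isBoundedDefault) ?_
  filter_upwards [eventually_lt_of_limsup_lt h1, eventually_lt_of_limsup_lt h2] with l a b
  refine (add_le_add a.le b.le).trans (le_of_eq ?_)
  have : (ε : ℝ≥0∞) = (ε / 2 : NNReal) + (ε / 2 : NNReal) := by
    rw [← ENNReal.coe_add, add_halves]
  rw [this]; ring

lemma joint_ap {d₁ d₂ : ℝ → ℝ≥0∞} (ad1 : ∀ s t, d₁ (s + t) ≤ d₁ s + d₁ t)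
    (ad2 : ∀ s t, d₂ (s + t) ≤ d₂ s + d₂ t) (ng1 : ∀ s, d₁ (-s) = d₁ s) (ng2 : ∀ s, d₂ (-s) = d₂ s)
    (e : ℝ≥0∞) (θ : ℝ) (hθ : 0 < θ) (hc : ∀ s, |s| < θ → d₂ s ≤ e) (a : ℝ) (ha : 0 < a)
    (H1 : ∀ ξ, ∃ τ, ξ ≤ τ ∧ τ ≤ ξ + a ∧ d₁ τ ≤ e) (H2 : ∀ ξ, ∃ τ, ξ ≤ τ ∧ τ ≤ ξ + a ∧ d₂ τ ≤ e) :
    ∃ A > 0, ∀ ξ, ∃ τ, ξ ≤ τ ∧ τ ≤ ξ + A ∧ d₁ τ ≤ 2 * e ∧ d₂ τ ≤ 3 * e := by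
  choose t1 p1 q1 r1 using H1
  choose t2 p2 q2 r2 using H2
  set c : ℝ → ℤ := fun ξ => ⌊(t1 ξ - t2 ξ) / θ⌋ with hcdef
  have hcr : ∀ ξ, c ξ ∈ Set.Icc ⌊-a / θ⌋ ⌊a / θ⌋ := fun ξ => by
    constructor
    · exact Int.floor_le_floor (by gcongr; linarith [p1 ξ, q2 ξ])
    · exact Int.floor_le_floor (by gcongr; linarith [p2 ξ, q1 ξ])
  have hr : ∀ k : ℤ, ∃ η : ℝ, (∃ ξ, c ξ = k) → c η = k := fun k => by
    by_cases h : ∃ ξ, c ξ = k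
    · exact ⟨h.choose, fun _ => h.choose_spec⟩
    · exact ⟨0, fun h' => absurd h' h⟩
  choose r hr using hr
  obtain ⟨M, hM⟩ : ∃ M, ∀ k ∈ Set.Icc ⌊-a / θ⌋ ⌊a / θ⌋, |t1 (r k)| ≤ M := by
    obtain ⟨M, hM⟩ := ((Set.finite_Icc ⌊-a / θ⌋ ⌊a / θ⌋).image (fun k => |t1 (r k)|)).bddAbove
    exact ⟨M, fun k hk => hM ⟨k, hk, rfl⟩⟩
  have hM0 : 0 ≤ M := (abs_nonneg _).trans (hM _ (hcr 0))
  refine ⟨M + a + M, by positivity, fun ξ => ?_⟩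
  set η := ξ + M with hη
  have hb := abs_le.1 (hM _ (hcr η))
  have hce : c (r (c η)) = c η := hr (c η) ⟨η, rfl⟩
  set ζ := r (c η) with hζ
  refine ⟨t1 η - t1 ζ, by linarith [p1 η], by linarith [q1 η], ?_, ?_⟩
  · calc d₁ (t1 η - t1 ζ) = d₁ (t1 η + -t1 ζ) := by rw [sub_eq_add_neg]
      _ ≤ d₁ (t1 η) + d₁ (t1 ζ) := by rw [← ng1 (t1 ζ)]; exact ad1 _ _
      _ ≤ e + e := add_le_add (r1 _) (r1 _)
      _ = _ := by ring
  · have hsm : |(t1 η - t2 η) - (t1 ζ - t2 ζ)| < θ := by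
      have := Int.abs_sub_lt_one_of_floor_eq_floor hce.symm
      rw [← sub_div, abs_div, abs_of_pos hθ, div_lt_one hθ] at this
      exact this
    calc d₂ (t1 η - t1 ζ) = d₂ ((t2 η + -t2 ζ) + ((t1 η - t2 η) - (t1 ζ - t2 ζ))) := by
          congr 1; ring
      _ ≤ d₂ (t2 η) + d₂ (-t2 ζ) + d₂ ((t1 η - t2 η) - (t1 ζ - t2 ζ)) :=
          (ad2 _ _).trans (add_le_add_left (ad2 _ _) _)
      _ ≤ e + e + e := by
          rw [ng2]
          exact add_le_add (add_le_add (r2 _) (r2 _)) (hc _ hsm)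
      _ = _ := by ring

section
variable {X Y : Type*} [MetricSpace X] [MetricSpace Y]

lemma bdist_prod_le (p q : X × Y) : bdist p q ≤ bdist p.1 q.1 + bdist p.2 q.2 := by
  have a1 := bdist_nonneg p.1 q.1
  have a2 := bdist_nonneg p.2 q.2
  unfold bdist at *
  rw [Prod.dist_eq]
  rcases le_total (dist p.1 q.1) (dist p.2 q.2) with h | h
  · rw [max_eq_right h]; linarith
  · rw [max_eq_left h]; linarith

lemma eW_prod_le {g : ℝ → X} {m : ℝ → Y} (hg : StronglyMeasurable g) (l s : ℝ) :
    eW (fun t => (g t, m t)) l s ≤ eW g l s + eW m l s := by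
  refine le_trans (avgSup_mono fun t => ?_) (avgSup_add (dE_meas hg s))
  unfold dE
  rw [← ENNReal.ofReal_add (bdist_nonneg _ _) (bdist_nonneg _ _)]
  exact ENNReal.ofReal_le_ofReal (bdist_prod_le _ _)

lemma WP_prod {g : ℝ → X} {m : ℝ → Y} (hg : StronglyMeasurable g) (hm : StronglyMeasurable m)
    (Hg : WP g) (Hm : WP m) : WP (fun t => (g t, m t)) := by
  intro ε hε
  have hε' : 0 < ε / 10 := by positivity
  obtain ⟨l1, hl1, a1, ha1, H1⟩ := Hg (ε / 10) hε'
  obtain ⟨l2, hl2, a2, ha2, H2⟩ := Hm (ε / 10) hε'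
  obtain ⟨l3, hl3, θ, hθ, H3⟩ := WP_cont hm Hm (ε / 10) hε'
  set L := max l1 (max l2 l3) with hL
  have hL0 : 0 < L := lt_of_lt_of_le hl1 (le_max_left _ _)
  obtain ⟨A, hA, HA⟩ := joint_ap (d₁ := eW g L) (d₂ := eW m L) (eW_add hg L) (eW_add hm L) (eW_neg g L)
    (eW_neg m L) (ENNReal.ofReal (ε / 10)) θ hθ
    (fun s hs => H3 s hs L ((le_max_right _ _).trans (le_max_right _ _))) (max a1 a2) (by positivity)
    (fun ξ => by
      obtain ⟨τ, x, y, w⟩ := H1 ξ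
      exact ⟨τ, x, y.trans (by gcongr; exact le_max_left _ _), w L (le_max_left _ _)⟩)
    (fun ξ => by
      obtain ⟨τ, x, y, w⟩ := H2 ξ
      exact ⟨τ, x, y.trans (by gcongr; exact le_max_right _ _),
        w L ((le_max_left _ _).trans (le_max_right _ _))⟩)
  refine ⟨L, hL0, A, hA, fun ξ => ?_⟩
  obtain ⟨τ, x, y, w1, w2⟩ := HA ξ
  refine ⟨τ, x, y, fun L' hL' => (eW_two _ hL0 hL' τ).trans ?_⟩
  calc _ ≤ 2 * (2 * ENNReal.ofReal (ε / 10) + 3 * ENNReal.ofReal (ε / 10)) := by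
        gcongr
        exact (eW_prod_le hg L τ).trans (add_le_add w1 w2)
    _ = 10 * ENNReal.ofReal (ε / 10) := by ring
    _ = ENNReal.ofReal (10 * (ε / 10)) := by rw [ENNReal.ofReal_mul (by norm_num)]; simp
    _ ≤ _ := by apply ENNReal.ofReal_le_ofReal; linarith

/-- the Weyl seminorm of the shift -/
noncomputable def eI (h : ℝ → X) (s : ℝ) : ℝ≥0∞ := limsup (fun l => eW h l s) atTop

lemma weylDinf_eq (h : ℝ → X) (s : ℝ) : weylDinf bdist 1 h (fun t => h (t + s)) = eI h s := by
  unfold weylDinf eI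
  simp_rw [weylD_eq]

lemma eI_le {h : ℝ → X} {s : ℝ} {c : ℝ≥0∞} (l : ℝ) (H : ∀ L ≥ l, eW h L s ≤ c) : eI h s ≤ c := by
  refine limsup_le_of_le (by isBoundedDefault) ?_
  filter_upwards [eventually_ge_atTop l] with L hL using H L hL

lemma eI_le_one (h : ℝ → X) (s : ℝ) : eI h s ≤ 1 :=
  eI_le 1 fun _ hL => eW_le_one h (lt_of_lt_of_le zero_lt_one hL) s

lemma eI_ne_top (h : ℝ → X) (s : ℝ) : eI h s ≠ ∞ := ne_top_of_le_ne_top (by simp) (eI_le_one h s)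

lemma eI_add {h : ℝ → X} (hh : StronglyMeasurable h) (s s' : ℝ) : eI h (s + s') ≤ eI h s + eI h s' := by
  unfold eI
  refine (limsup_le_limsup (Eventually.of_forall fun l => eW_add hh l s s')
    (by isBoundedDefault) (by isBoundedDefault)).trans ?_
  exact limsup_add_le_enn _ _

lemma eI_prod_le {g : ℝ → X} {m : ℝ → Y} (hg : StronglyMeasurable g) (s : ℝ) :
    eI (fun t => (g t, m t)) s ≤ eI g s + eI m s := by
  unfold eI
  refine (limsup_le_limsup (Eventually.of_forall fun l => eW_prod_le hg l s)
    (by isBoundedDefault) (by isBoundedDefault)).trans ?_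
  exact limsup_add_le_enn _ _

lemma WP_TB {h : ℝ → X} (hh : StronglyMeasurable h) (H : WP h) : TBNorm (fun s => (eI h s).toReal) where
  nonneg := fun t => ENNReal.toReal_nonneg
  add := fun s t => by
    rw [← ENNReal.toReal_add (eI_ne_top h s) (eI_ne_top h t)]
    exact ENNReal.toReal_mono (ENNReal.add_ne_top.2 ⟨eI_ne_top h s, eI_ne_top h t⟩) (eI_add hh s t)
  neg := fun t => by
    unfold eI
    simp_rw [eW_neg]
  cont := fun ε hε => by
    obtain ⟨l, hl, θ, hθ, h1⟩ := WP_cont hh H (ε / 2) (by positivity)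
    refine ⟨θ, hθ, fun s hs => ?_⟩
    have := ENNReal.toReal_le_of_le_ofReal (by positivity) (eI_le l (h1 s hs))
    linarith
  dense := fun ε hε => by
    obtain ⟨l, hl, a, ha, h1⟩ := H (ε / 2) (by positivity)
    refine ⟨a, ha, fun ξ => ?_⟩
    obtain ⟨τ, x, y, w⟩ := h1 ξ
    have := ENNReal.toReal_le_of_le_ofReal (by positivity) (eI_le l w)
    exact ⟨τ, x, y, by linarith⟩

/-- sets of uniformly small upper density -/
def SmallD (ε : ℝ) (B : Set ℝ) : Prop :=
  ∃ l > 0, ∀ L ≥ l, avgSup L (B.indicator 1) ≤ ENNReal.ofReal ε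

lemma SmallD.mono {ε : ℝ} {A B : Set ℝ} (h : SmallD ε B) (hAB : A ⊆ B) : SmallD ε A := by
  obtain ⟨l, hl, H⟩ := h
  exact ⟨l, hl, fun L hL => (avgSup_mono fun t =>
    Set.indicator_le_indicator_of_subset hAB (fun _ => zero_le) t).trans (H L hL)⟩

lemma SmallD.union {ε ε' : ℝ} (hε : 0 ≤ ε) (hε' : 0 ≤ ε') {A B : Set ℝ} (hA : SmallD ε A) (hB : SmallD ε' B)
    (hm : MeasurableSet A) : SmallD (ε + ε') (A ∪ B) := by
  obtain ⟨l, hl, H⟩ := hA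
  obtain ⟨l', hl', H'⟩ := hB
  refine ⟨max l l', by positivity, fun L hL => ?_⟩
  have : ∀ t, (A ∪ B).indicator (1 : ℝ → ℝ≥0∞) t ≤ A.indicator 1 t + B.indicator 1 t := fun t => by
    by_cases h1 : t ∈ A
    · simp [h1]
    · by_cases h2 : t ∈ B <;> simp [h1, h2]
  rw [ENNReal.ofReal_add hε hε']
  refine (avgSup_mono this).trans ((avgSup_add (measurable_one.indicator hm)).trans ?_)
  exact add_le_add (H L ((le_max_left _ _).trans hL)) (H' L ((le_max_right _ _).trans hL))

lemma SmallD.empty {ε : ℝ} : SmallD ε ∅ :=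
  ⟨1, one_pos, fun L hL => by
    rw [Set.indicator_empty]
    exact (avgSup_const_le (lt_of_lt_of_le one_pos hL) 0).trans zero_le⟩

lemma SmallD.biUnion {ι : Type*} (s : Finset ι) {e : ι → ℝ} (he : ∀ i, 0 ≤ e i) {B : ι → Set ℝ}
    (hB : ∀ i ∈ s, SmallD (e i) (B i)) (hm : ∀ i, MeasurableSet (B i)) :
    SmallD (∑ i ∈ s, e i) (⋃ i ∈ s, B i) := by
  classical
  induction s using Finset.induction_on with
  | empty => simpa using SmallD.empty
  | insert i s hi ih =>
    rw [Finset.sum_insert hi, Finset.set_biUnion_insert]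
    exact SmallD.union (he i) (Finset.sum_nonneg fun j _ => he j) (hB i (Finset.mem_insert_self i s))
      (ih fun j hj => hB j (Finset.mem_insert_of_mem hj)) (hm i)

/-- Subordination of f to h up to small sets -/
def SubD (h : ℝ → X) (f : ℝ → Y) : Prop := ∀ ε > 0, ∃ κ > 0, ∃ B : Set ℝ, MeasurableSet B ∧ SmallD ε B ∧
  ∀ t t', t ∉ B → t' ∉ B → bdist (h t) (h t') < κ → bdist (f t) (f t') ≤ ε

lemma SubD.eW_le {h : ℝ → X} {f : ℝ → Y} (hh : StronglyMeasurable h) (H : SubD h f) (ε : ℝ) (hε : 0 < ε) :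
    ∃ κ : ℝ, 0 < κ ∧ ∃ l > 0, ∀ L ≥ l, ∀ s, eW f L s ≤ ENNReal.ofReal ε + ENNReal.ofReal κ * eW h L s := by
  obtain ⟨κ, hκ, B, hB, ⟨l, hl, hS⟩, H⟩ := H (ε / 3) (by positivity)
  refine ⟨1 / κ, by positivity, l, hl, fun L hL s => ?_⟩
  have hL0 : 0 < L := lt_of_lt_of_le hl hL
  have hi : Measurable (B.indicator (1 : ℝ → ℝ≥0∞)) := measurable_one.indicator hB
  have key : ∀ t, dE f s t ≤ ENNReal.ofReal (1 / κ) * dE h s t +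
      (B.indicator 1 t + (B.indicator 1 (t + s) + ENNReal.ofReal (ε / 3))) := by
    intro t
    by_cases h1 : t ∈ B
    · refine (dE_le_one f s t).trans ?_
      rw [Set.indicator_of_mem h1, Pi.one_apply]
      exact le_add_left (le_add_right le_rfl)
    by_cases h2 : t + s ∈ B
    · refine (dE_le_one f s t).trans ?_
      rw [Set.indicator_of_mem h2, Pi.one_apply]
      exact le_add_left (le_add_left (le_add_right le_rfl))
    by_cases h3 : bdist (h t) (h (t + s)) < κ
    · have := ENNReal.ofReal_le_ofReal (H t (t + s) h1 h2 h3)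
      exact le_add_left (le_add_left (le_add_left this))
    · refine (dE_le_one f s t).trans (le_add_right ?_)
      unfold dE
      rw [← ENNReal.ofReal_mul (by positivity)]
      apply ENNReal.one_le_ofReal.2
      rw [one_div, inv_mul_eq_div, one_le_div hκ]
      exact not_lt.1 h3
  refine (avgSup_mono key).trans ((avgSup_add ((dE_meas hh s).const_mul _)).trans ?_)
  rw [avgSup_const_mul _ ENNReal.ofReal_ne_top, add_comm]
  refine add_le_add_left ?_ _
  refine (avgSup_add hi).trans ?_
  have e1 := avgSup_add (l := L) (u := fun t => B.indicator (1 : ℝ → ℝ≥0∞) (t + s))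
    (v := fun _ => ENNReal.ofReal (ε / 3)) (hi.comp (measurable_add_const s))
  rw [avgSup_shift] at e1
  calc _ ≤ ENNReal.ofReal (ε / 3) + (ENNReal.ofReal (ε / 3) + ENNReal.ofReal (ε / 3)) :=
        add_le_add (hS L hL) (e1.trans (add_le_add (hS L hL) (avgSup_const_le hL0 _)))
    _ = _ := by
        rw [← ENNReal.ofReal_add (by positivity) (by positivity),
          ← ENNReal.ofReal_add (by positivity) (by positivity)]
        congr 1; ring

lemma SubD.WP {h : ℝ → X} {f : ℝ → Y} (hh : StronglyMeasurable h) (H : SubD h f) (Hh : WP h) : WP f := by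
  intro ε hε
  obtain ⟨κ, hκ, l, hl, H⟩ := H.eW_le hh (ε / 2) (by positivity)
  obtain ⟨l', hl', a, ha, H'⟩ := Hh (ε / 2 / κ) (by positivity)
  refine ⟨max l l', by positivity, a, ha, fun ξ => ?_⟩
  obtain ⟨τ, x, y, w⟩ := H' ξ
  refine ⟨τ, x, y, fun L hL => (H L ((le_max_left _ _).trans hL) τ).trans ?_⟩
  calc _ ≤ ENNReal.ofReal (ε / 2) + ENNReal.ofReal κ * ENNReal.ofReal (ε / 2 / κ) := by
        gcongr; exact w L ((le_max_right _ _).trans hL)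
    _ = _ := by
        rw [← ENNReal.ofReal_mul hκ.le, ← ENNReal.ofReal_add (by positivity) (by positivity)]
        congr 1
        field_simp
        ring

lemma SubD.ret {h : ℝ → X} {f : ℝ → Y} (hh : StronglyMeasurable h) (H : SubD h f) (τ : ℕ → ℝ)
    (ht : Tendsto (fun j => eI h (τ j)) atTop (𝓝 0)) : Tendsto (fun j => eI f (τ j)) atTop (𝓝 0) := by
  rw [ENNReal.tendsto_nhds_zero]
  intro e he
  by_cases he' : e = ∞
  · exact Eventually.of_forall fun _ => by rw [he']; exact le_top
  set ε := e.toReal with hε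
  have hε0 : 0 < ε := ENNReal.toReal_pos he.ne' he'
  obtain ⟨κ, hκ, l, hl, H⟩ := H.eW_le hh (ε / 2) (by positivity)
  have := (ENNReal.tendsto_nhds_zero.1 ht) (ENNReal.ofReal (ε / 2 / κ)) (by simpa using by positivity)
  filter_upwards [this] with j hj
  have h1 : eI f (τ j) ≤ ENNReal.ofReal (ε / 2) + ENNReal.ofReal κ * eI h (τ j) := by
    unfold eI
    rw [← ENNReal.limsup_const_mul_of_ne_top ENNReal.ofReal_ne_top]
    have e1 : limsup (fun l => eW f l (τ j)) atTop ≤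
        limsup (fun l => (fun _ => ENNReal.ofReal (ε / 2)) l + ENNReal.ofReal κ * eW h l (τ j)) atTop := by
      refine limsup_le_limsup ?_ (by isBoundedDefault) (by isBoundedDefault)
      filter_upwards [eventually_ge_atTop l] with L hL using H L hL _
    refine e1.trans ((limsup_add_le_enn _ _).trans ?_)
    gcongr
    simp
  refine h1.trans ?_
  calc _ ≤ ENNReal.ofReal (ε / 2) + ENNReal.ofReal κ * ENNReal.ofReal (ε / 2 / κ) := by gcongr
    _ = ENNReal.ofReal ε := by
        rw [← ENNReal.ofReal_mul hκ.le, ← ENNReal.ofReal_add (by positivity) (by positivity)]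
        congr 1
        field_simp
        ring
    _ = e := ENNReal.ofReal_toReal he'

end

lemma ind_one_le (S : Set ℝ) (t : ℝ) (v : ℝ≥0∞) (H : t ∈ S → 1 ≤ v) :
    S.indicator (1 : ℝ → ℝ≥0∞) t ≤ v := by
  by_cases h : t ∈ S
  · rw [Set.indicator_of_mem h]; exact H h
  · rw [Set.indicator_of_notMem h]; exact zero_le

section
variable {X : Type*} [MetricSpace X]

lemma bdist_eq_dist_of_lt {x y : X} (h : bdist x y < 1) : bdist x y = dist x y := by
  unfold bdist at *
  rcases min_lt_iff.1 h with h | h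
  · exact absurd h (lt_irrefl _)
  · exact min_eq_right h.le

lemma WP_tight {h : ℝ → X} (hh : StronglyMeasurable h) (H : WP h) (z : ℕ → X)
    (hz : ∀ t, ∀ ε > 0, ∃ k, dist (h t) (z k) < ε) (r : ℝ) (hr : 0 < r) (ε : ℝ) (hε : 0 < ε) :
    ∃ J : ℕ, SmallD ε {t | ∀ k ≤ J, r ≤ dist (h t) (z k)} := by
  set q := min 1 r with hq
  have hq0 : 0 < q := by positivity
  obtain ⟨l, hl, a, ha, HC⟩ := WP_compress hh H (ε * q / 4) (by positivity)
  obtain ⟨J, hJ⟩ := (ENNReal.tendsto_atTop_zero.1 (psiJ_int hh z hz (a + l)))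
    (ENNReal.ofReal (ε * q / 4 * l)) (by simpa using by positivity)
  have hJ := hJ J le_rfl
  refine ⟨J, l, hl, fun L hL => ?_⟩
  have h1 := HC (psiJ z J) 1 (by simp) (fun x y => by rw [one_mul]; exact psiJ_lip z J x y) l le_rfl
  have h2 : avgSup l (fun t => psiJ z J (h t)) ≤ ENNReal.ofReal (ε * q / 2) := by
    refine h1.trans ?_
    calc _ ≤ ENNReal.ofReal (1 / l) * ENNReal.ofReal (ε * q / 4 * l) + 1 * ENNReal.ofReal (ε * q / 4) := by
          gcongr
      _ = _ := by
          rw [one_mul, ← ENNReal.ofReal_mul (by positivity), ← ENNReal.ofReal_add (by positivity) (by positivity)]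
          congr 1
          field_simp
          norm_num
  have h3 : ∀ t, Set.indicator {t | ∀ k ≤ J, r ≤ dist (h t) (z k)} (1 : ℝ → ℝ≥0∞) t ≤
      ENNReal.ofReal (1 / q) * psiJ z J (h t) := by
    intro t
    refine ind_one_le _ t _ fun ht => ?_
    have : ENNReal.ofReal q ≤ psiJ z J (h t) := le_iInf fun i => by
      apply ENNReal.ofReal_le_ofReal
      exact min_le_min le_rfl (ht i (by omega))
    calc (1 : ℝ≥0∞) = ENNReal.ofReal (1 / q) * ENNReal.ofReal q := by
          rw [← ENNReal.ofReal_mul (by positivity), one_div_mul_cancel hq0.ne']; simp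
      _ ≤ _ := by gcongr
  calc _ ≤ ENNReal.ofReal (1 / q) * avgSup L (fun t => psiJ z J (h t)) := by
        rw [← avgSup_const_mul _ ENNReal.ofReal_ne_top]
        exact avgSup_mono h3
    _ ≤ ENNReal.ofReal (1 / q) * (2 * ENNReal.ofReal (ε * q / 2)) := by
        gcongr
        exact (avgSup_le_two hl hL _).trans (by gcongr)
    _ = ENNReal.ofReal ε := by
        rw [← ENNReal.ofReal_ofNat, ← ENNReal.ofReal_mul (by norm_num), ← ENNReal.ofReal_mul (by positivity)]
        congr 1
        field_simp

lemma finset_sep (s : Finset ℝ) : ∃ η > 0, ∀ x ∈ s, ∀ y ∈ s, x ≠ y → 2 * η ≤ |x - y| := by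
  classical
  by_cases hne : s.offDiag.Nonempty
  · obtain ⟨p, hp, hmin⟩ := s.offDiag.exists_min_image (fun p => |p.1 - p.2|) hne
    rw [Finset.mem_offDiag] at hp
    have : 0 < |p.1 - p.2| := abs_pos.2 (sub_ne_zero.2 hp.2.2)
    refine ⟨|p.1 - p.2| / 2, by positivity, fun x hx y hy hxy => ?_⟩
    have := hmin (x, y) (Finset.mem_offDiag.2 ⟨hx, hy, hxy⟩)
    simp only at this
    linarith
  · refine ⟨1, one_pos, fun x hx y hy hxy => ?_⟩
    exact absurd ⟨(x, y), Finset.mem_offDiag.2 ⟨hx, hy, hxy⟩⟩ hne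

lemma bad_finite {h : ℝ → X} (hh : StronglyMeasurable h) (H : WP h) (w : X) (ε : ℝ) (hε : 0 < ε) :
    {r : ℝ | ∀ η > 0, ¬ SmallD ε {t | |dist (h t) w - r| < η}}.Finite := by
  by_contra hinf
  obtain ⟨N, hN⟩ := exists_nat_gt (16 / ε)
  have hN0 : (0 : ℝ) < N := lt_trans (by positivity) hN
  obtain ⟨s, hs, hcard⟩ := Set.Infinite.exists_subset_card_eq hinf N
  obtain ⟨η, hη, hsep⟩ := finset_sep s
  set ψ : ℝ → X → ℝ≥0∞ := fun c x => ENNReal.ofReal (max 0 (1 - |dist x w - c| / η)) with hψ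
  have hψ1 : ∀ c x, ψ c x ≤ 1 := fun c x => by
    refine ENNReal.ofReal_le_one.2 (max_le zero_le_one ?_)
    have : 0 ≤ |dist x w - c| / η := by positivity
    linarith
  have hlip : ∀ c x y, ψ c x ≤ ψ c y + ENNReal.ofReal (1 + 1 / η) * ENNReal.ofReal (bdist x y) := by
    intro c x y
    by_cases hb : bdist x y < 1
    · rw [← ENNReal.ofReal_mul (by positivity), ← ENNReal.ofReal_add (by positivity)
        (mul_nonneg (by positivity) (bdist_nonneg _ _))]
      apply ENNReal.ofReal_le_ofReal
      rw [bdist_eq_dist_of_lt hb]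
      have hd : 0 ≤ dist x y := dist_nonneg
      have h1 : |dist y w - c| ≤ |dist x w - c| + dist x y := by
        have := abs_sub_abs_le_abs_sub (dist y w - c) (dist x w - c)
        have h2 := abs_dist_sub_le y x w
        rw [dist_comm y x] at h2
        rw [show dist y w - c - (dist x w - c) = dist y w - dist x w by ring] at this
        linarith
      have h3 : |dist y w - c| / η ≤ |dist x w - c| / η + dist x y / η := by
        rw [← add_div]; gcongr
      have h4 : (1 + 1 / η) * dist x y = dist x y + dist x y / η := by ring
      have h5 : 0 ≤ dist x y / η := by positivity
      rw [h4]
      refine max_le (by positivity) ?_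
      have := le_max_right 0 (1 - |dist y w - c| / η)
      linarith
    · have hb1 : bdist x y = 1 := le_antisymm (bdist_le_one _ _) (not_lt.1 hb)
      refine (hψ1 c x).trans (le_add_left ?_)
      rw [hb1, ← ENNReal.ofReal_mul (by positivity), mul_one]
      apply ENNReal.one_le_ofReal.2
      have : 0 ≤ 1 / η := by positivity
      linarith
  obtain ⟨l, hl, a, ha, HC⟩ := WP_compress hh H (ε / 8 / (1 + 1 / η)) (by positivity)
  set L := max l a with hLdef
  have hL0 : 0 < L := lt_of_lt_of_le hl (le_max_left _ _)
  have hLa : a ≤ L := le_max_right _ _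
  set A : ℝ → Set ℝ := fun c => {t | |dist (h t) w - c| < η} with hA
  have hAm : ∀ c, MeasurableSet (A c) := fun c => by
    have : Measurable (fun t => |dist (h t) w - c|) :=
      ((hh.dist stronglyMeasurable_const).measurable.sub_const c).abs
    exact measurableSet_lt this measurable_const
  have hdisj : (s : Set ℝ).PairwiseDisjoint A := by
    intro x hx y hy hxy
    rw [Function.onFun, Set.disjoint_left]
    intro t h1 h2
    have h1 : |dist (h t) w - x| < η := h1
    have h2 : |dist (h t) w - y| < η := h2
    have h3 := hsep x hx y hy hxy
    have h4 := abs_sub (dist (h t) w - y) (dist (h t) w - x)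
    rw [show dist (h t) w - y - (dist (h t) w - x) = x - y by ring] at h4
    linarith
  have hψA : ∀ c t, ψ c (h t) ≤ (A c).indicator 1 t := fun c t => by
    by_cases ht : t ∈ A c
    · rw [Set.indicator_of_mem ht]; exact hψ1 _ _
    · rw [Set.indicator_of_notMem ht]
      have : η ≤ |dist (h t) w - c| := not_lt.1 ht
      have h1 : 1 ≤ |dist (h t) w - c| / η := by rwa [one_le_div hη]
      simp only [hψ]
      rw [max_eq_left (by linarith)]; simp
  have hsum : ∑ c ∈ s, ∫⁻ t in Set.Icc 0 (a + L), ψ c (h t) ≤ ∑ c ∈ s, ENNReal.ofReal (2 * L / N) := by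
    calc _ ≤ ∑ c ∈ s, volume.restrict (Set.Icc 0 (a + L)) (A c) := by
          refine Finset.sum_le_sum fun c _ => (lintegral_mono (hψA c)).trans ?_
          rw [lintegral_indicator_one (hAm c)]
      _ = volume.restrict (Set.Icc 0 (a + L)) (⋃ c ∈ s, A c) :=
          (measure_biUnion_finset hdisj fun c _ => hAm c).symm
      _ ≤ volume.restrict (Set.Icc 0 (a + L)) Set.univ := measure_mono (Set.subset_univ _)
      _ = ENNReal.ofReal (a + L) := by simp
      _ ≤ ENNReal.ofReal (N * (2 * L / N)) := by
          apply ENNReal.ofReal_le_ofReal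
          rw [mul_div_cancel₀ _ hN0.ne']; linarith
      _ = _ := by
          rw [Finset.sum_const, hcard, nsmul_eq_mul, ENNReal.ofReal_mul hN0.le, ENNReal.ofReal_natCast]
  have hsne : s.Nonempty := by
    rw [← Finset.card_pos, hcard]
    exact_mod_cast hN0
  obtain ⟨c, hcs, hc⟩ := ENNReal.exists_le_of_sum_le hsne hsum
  refine hs hcs (η / 2) (by positivity) ⟨L, hL0, fun L' hL' => ?_⟩
  have h1 := HC (ψ c) (ENNReal.ofReal (1 + 1 / η)) ENNReal.ofReal_ne_top (hlip c) L (le_max_left _ _)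
  have h2 : avgSup L (fun t => ψ c (h t)) ≤ ENNReal.ofReal (ε / 4) := by
    refine h1.trans ?_
    calc _ ≤ ENNReal.ofReal (1 / L) * ENNReal.ofReal (2 * L / N) +
          ENNReal.ofReal (1 + 1 / η) * ENNReal.ofReal (ε / 8 / (1 + 1 / η)) := by gcongr
      _ = ENNReal.ofReal (2 / N + ε / 8) := by
          rw [← ENNReal.ofReal_mul (by positivity), ← ENNReal.ofReal_mul (by positivity),
            ← ENNReal.ofReal_add (by positivity) (by positivity)]
          congr 1
          congr 1
          · field_simp
          · rw [mul_div_cancel₀]; positivity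
      _ ≤ _ := by
          apply ENNReal.ofReal_le_ofReal
          have : 2 / (N : ℝ) ≤ ε / 8 := by
            rw [div_lt_iff₀ hε] at hN
            rw [div_le_iff₀ hN0]; linarith
          linarith
  have h3 : ∀ t, Set.indicator {t | |dist (h t) w - c| < η / 2} (1 : ℝ → ℝ≥0∞) t ≤ 2 * ψ c (h t) := by
    intro t
    refine ind_one_le _ t _ fun ht => ?_
    have ht : |dist (h t) w - c| < η / 2 := ht
    have h4 : |dist (h t) w - c| / η ≤ 1 / 2 := by
      rw [div_le_iff₀ hη]; linarith
    rw [← ENNReal.ofReal_ofNat, ← ENNReal.ofReal_mul (by norm_num)]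
    refine ENNReal.one_le_ofReal.2 ?_
    have := le_max_right 0 (1 - |dist (h t) w - c| / η)
    linarith
  calc _ ≤ 2 * avgSup L' (fun t => ψ c (h t)) := by
        rw [← avgSup_const_mul _ (by simp)]
        exact avgSup_mono h3
    _ ≤ 2 * (2 * ENNReal.ofReal (ε / 4)) := by
        gcongr
        exact (avgSup_le_two hL0 hL' _).trans (by gcongr)
    _ = ENNReal.ofReal ε := by
        rw [← ENNReal.ofReal_ofNat, ← ENNReal.ofReal_mul (by norm_num), ← ENNReal.ofReal_mul (by norm_num)]
        congr 1
        ring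

lemma SmallD.le {ε ε' : ℝ} {B : Set ℝ} (h : SmallD ε B) (hle : ε ≤ ε') : SmallD ε' B := by
  obtain ⟨l, hl, H⟩ := h
  exact ⟨l, hl, fun L hL => (H L hL).trans (ENNReal.ofReal_le_ofReal hle)⟩

lemma generic_radius {h : ℝ → X} (hh : StronglyMeasurable h) (H : WP h) (z : ℕ → X) (α β : ℝ)
    (hαβ : α < β) : ∃ r, α < r ∧ r < β ∧ ∀ k, ∀ ε > 0, ∃ η > 0,
      SmallD ε {t | |dist (h t) (z k) - r| < η} := by
  have hc : (⋃ p : ℕ × ℕ, {r : ℝ | ∀ η > 0,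
      ¬ SmallD (1 / ((p.2 : ℝ) + 1)) {t | |dist (h t) (z p.1) - r| < η}}).Countable :=
    Set.countable_iUnion fun p => (bad_finite hh H _ _ (by positivity)).countable
  obtain ⟨r, hr, h1, h2⟩ := (hc.dense_compl ℝ).exists_between hαβ
  refine ⟨r, h1, h2, fun k ε hε => ?_⟩
  obtain ⟨m, hm⟩ := exists_nat_one_div_lt hε
  simp only [Set.mem_compl_iff, Set.mem_iUnion, Set.mem_ofPred_eq, not_exists, not_forall,
    not_not] at hr
  obtain ⟨η, hη, hs⟩ := hr (k, m)
  exact ⟨η, hη, hs.le hm.le⟩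

lemma index_sub {h : ℝ → X} (hh : StronglyMeasurable h) (H : WP h) (z : ℕ → X)
    (hz : ∀ t, ∀ ε > 0, ∃ k, dist (h t) (z k) < ε) (r : ℝ) (hr : 0 < r)
    (hgen : ∀ k, ∀ ε > 0, ∃ η > 0, SmallD ε {t | |dist (h t) (z k) - r| < η})
    (kn : ℝ → ℕ) (hk1 : ∀ t, dist (h t) (z (kn t)) < r)
    (hk2 : ∀ t k, dist (h t) (z k) < r → kn t ≤ k) (ε : ℝ) (hε : 0 < ε) :
    ∃ κ > 0, ∃ B : Set ℝ, MeasurableSet B ∧ SmallD ε B ∧ ∃ J : ℕ, (∀ t ∉ B, kn t ≤ J) ∧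
      ∀ t t', t ∉ B → t' ∉ B → bdist (h t) (h t') < κ → kn t = kn t' := by
  have hdm : ∀ k, Measurable (fun t => dist (h t) (z k)) := fun k =>
    (hh.dist stronglyMeasurable_const).measurable
  obtain ⟨J, hJ⟩ := WP_tight hh H z hz r hr (ε / 2) (by positivity)
  choose η hη0 hη using fun k => hgen k (ε / 2 / (J + 1)) (by positivity)
  have hm2 : ∀ k, MeasurableSet {t | |dist (h t) (z k) - r| < η k} := fun k =>
    measurableSet_lt ((hdm k).sub_const r).abs measurable_const
  have hm1 : MeasurableSet {t | ∀ k ≤ J, r ≤ dist (h t) (z k)} := by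
    have : {t | ∀ k ≤ J, r ≤ dist (h t) (z k)} = ⋂ k, ⋂ (_ : k ≤ J), {t | r ≤ dist (h t) (z k)} := by
      ext t; simp
    rw [this]
    exact MeasurableSet.iInter fun k => MeasurableSet.iInter fun _ =>
      measurableSet_le measurable_const (hdm k)
  set B2 := ⋃ k ∈ Finset.range (J + 1), {t | |dist (h t) (z k) - r| < η k} with hB2
  have hB2s : SmallD (ε / 2) B2 := by
    have := SmallD.biUnion (Finset.range (J + 1)) (e := fun _ => ε / 2 / (J + 1))
      (fun _ => by positivity) (B := fun k => {t | |dist (h t) (z k) - r| < η k}) (fun k _ => hη k) hm2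
    refine this.le (le_of_eq ?_)
    rw [Finset.sum_const, Finset.card_range, nsmul_eq_mul]
    push_cast
    field_simp
  obtain ⟨κ, hκ, hκle⟩ : ∃ κ > 0, ∀ k ∈ Finset.range (J + 1), κ ≤ η k := by
    obtain ⟨i, _, hi⟩ := (Finset.range (J + 1)).exists_min_image η ⟨0, by simp⟩
    exact ⟨η i, hη0 i, hi⟩
  refine ⟨min κ 1, by positivity, {t | ∀ k ≤ J, r ≤ dist (h t) (z k)} ∪ B2,
    hm1.union (Finset.measurableSet_biUnion _ fun k _ => hm2 k), ?_, J, ?_, ?_⟩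
  · have := SmallD.union (by positivity) (by positivity) hJ hB2s hm1
    exact this.le (by linarith)
  · intro t ht
    have : ¬ ∀ k ≤ J, r ≤ dist (h t) (z k) := fun h' => ht (Or.inl h')
    push Not at this
    obtain ⟨k, hk, hkr⟩ := this
    exact (hk2 t k hkr).trans hk
  · have main : ∀ t t', t ∉ {t | ∀ k ≤ J, r ≤ dist (h t) (z k)} ∪ B2 →
        bdist (h t) (h t') < min κ 1 → kn t' ≤ kn t := by
      intro t t' ht hd
      have hlt : bdist (h t) (h t') < 1 := hd.trans_le (min_le_right _ _)
      rw [bdist_eq_dist_of_lt hlt] at hd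
      have : ¬ ∀ k ≤ J, r ≤ dist (h t) (z k) := fun h' => ht (Or.inl h')
      push Not at this
      obtain ⟨k, hk, hkr⟩ := this
      have hkJ : kn t ∈ Finset.range (J + 1) := by
        have := (hk2 t k hkr).trans hk
        simp; omega
      have hn : ¬ |dist (h t) (z (kn t)) - r| < η (kn t) := fun h' =>
        ht (Or.inr (Set.mem_biUnion hkJ h'))
      have h1 := hk1 t
      rw [abs_of_neg (by linarith)] at hn
      push Not at hn
      refine hk2 t' _ ?_
      have h2 := dist_triangle_left (h t') (z (kn t)) (h t)
      have h3 := hκle _ hkJ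
      have h4 := min_le_left κ 1
      linarith
    intro t t' ht ht' hd
    exact le_antisymm (main t' t ht' (by rwa [bdist_comm])) (main t t' ht hd)

end

/-- agreement of the first m entries -/
def agree (σ σ' : ℕ → ℕ) (m : ℕ) : Prop := ∀ i < m, σ' i = σ i

lemma agree.symm {σ σ' : ℕ → ℕ} {m : ℕ} (h : agree σ σ' m) : agree σ' σ m := fun i hi => (h i hi).symm
lemma agree.trans {σ σ' σ'' : ℕ → ℕ} {m : ℕ} (h : agree σ σ' m) (h' : agree σ' σ'' m) : agree σ σ'' m :=
  fun i hi => (h' i hi).trans (h i hi)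
lemma agree.le {σ σ' : ℕ → ℕ} {m n : ℕ} (h : agree σ σ' m) (hn : n ≤ m) : agree σ σ' n :=
  fun i hi => h i (lt_of_lt_of_le hi hn)
lemma agree.rfl {σ : ℕ → ℕ} {m : ℕ} : agree σ σ m := fun _ _ => Eq.refl _

lemma agree_open (σ : ℕ → ℕ) (m : ℕ) : IsOpen {σ' | agree σ σ' m} := by
  have : {σ' | agree σ σ' m} = ⋂ i ∈ Finset.range m, {σ' : ℕ → ℕ | σ' i = σ i} := by
    ext σ'; simp [agree]
  rw [this]
  refine isOpen_biInter_finset fun i _ => ?_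
  have hc : Continuous (fun s : ℕ → ℕ => s i) := continuous_apply i
  exact (isOpen_discrete ({σ i} : Set ℕ)).preimage hc

/-- local constancy -/
def LCst {U : Type*} (f : (ℕ → ℕ) → U) : Prop := ∀ σ, ∃ m, ∀ σ', agree σ σ' m → f σ' = f σ

lemma lc_select {U : Type*} (R : (ℕ → ℕ) → U → Prop)
    (H : ∀ σ, ∃ y m, ∀ σ', agree σ σ' m → R σ' y) : ∃ f : (ℕ → ℕ) → U, LCst f ∧ ∀ σ, R σ (f σ) := by
  classical
  have H' : ∀ σ, ∃ m, ∃ y, ∀ σ', agree σ σ' m → R σ' y := fun σ => by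
    obtain ⟨y, m, h⟩ := H σ
    exact ⟨m, y, h⟩
  set m : (ℕ → ℕ) → ℕ := fun σ => Nat.find (H' σ) with hm
  have hm1 : ∀ σ, ∃ y, ∀ σ', agree σ σ' (m σ) → R σ' y := fun σ => Nat.find_spec (H' σ)
  have hm2 : ∀ σ k, (∃ y, ∀ σ', agree σ σ' k → R σ' y) → m σ ≤ k := fun σ k h => Nat.find_min' (H' σ) h
  have key : ∀ σ σ', agree σ σ' (m σ) → m σ' ≤ m σ := fun σ σ' h => by
    obtain ⟨y, hy⟩ := hm1 σ
    exact hm2 σ' _ ⟨y, fun σ'' h' => hy σ'' (h.trans h')⟩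
  have key2 : ∀ σ σ', agree σ σ' (m σ) → m σ' = m σ := fun σ σ' h =>
    le_antisymm (key σ σ' h) (key σ' σ (h.symm.le (key σ σ' h)))
  have hne : Nonempty U := ⟨(H fun _ => 0).choose⟩
  set F : Set (ℕ → ℕ) → U := fun S => Classical.epsilon fun y => ∀ σ' ∈ S, R σ' y with hF
  refine ⟨fun σ => F {σ' | agree σ σ' (m σ)}, fun σ => ⟨m σ, fun σ' h => ?_⟩, fun σ => ?_⟩
  · have : {σ'' | agree σ' σ'' (m σ')} = {σ'' | agree σ σ'' (m σ)} := by
      rw [key2 σ σ' h]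
      ext σ''
      exact ⟨fun h' => h.trans h', fun h' => h.symm.trans h'⟩
    simp only [this]
  · have : ∃ y, ∀ σ' ∈ {σ' | agree σ σ' (m σ)}, R σ' y := hm1 σ
    exact Classical.epsilon_spec this σ agree.rfl

section
variable {X : Type*} [MetricSpace X]

/-- compatibility of a code with a point -/
def compat (z : ℕ → X) (σ : ℕ → ℕ) (x : X) : Prop := ∀ n, dist x (z (σ n)) ≤ (1 / 2 : ℝ) ^ n

lemma compat_near (z : ℕ → X) {σ : ℕ → ℕ} {x : X} (hx : compat z σ x) {κ : ℝ} (hκ : 0 < κ) :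
    ∃ m, ∀ σ', agree σ σ' m → ∀ x', compat z σ' x' → dist x x' < κ := by
  obtain ⟨n, hn⟩ := exists_pow_lt_of_lt_one (by positivity : 0 < κ / 2) (by norm_num : (1 / 2 : ℝ) < 1)
  refine ⟨n + 1, fun σ' h x' hx' => ?_⟩
  have h1 := hx n
  have h2 := hx' n
  rw [h n (by omega)] at h2
  have := dist_triangle_right x x' (z (σ n))
  linarith

lemma compat_incompat [CompleteSpace X] (z : ℕ → X) {σ : ℕ → ℕ} (hx : ∀ x, ¬ compat z σ x) :
    ∃ m, ∀ σ', agree σ σ' m → ∀ x', ¬ compat z σ' x' := by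
  by_contra hcon
  push Not at hcon
  choose s hs x hx' using hcon
  have hb : ∀ n m, n < m → dist (x m) (z (σ n)) ≤ (1 / 2 : ℝ) ^ n := fun n m hnm => by
    have := hx' m n
    rwa [hs m n hnm] at this
  have hc : CauchySeq x := by
    rw [Metric.cauchySeq_iff]
    intro ε hε
    obtain ⟨n, hn⟩ := exists_pow_lt_of_lt_one (by positivity : 0 < ε / 2) (by norm_num : (1 / 2 : ℝ) < 1)
    refine ⟨n + 1, fun i hi j hj => ?_⟩
    have h1 := hb n i (by omega)
    have h2 := hb n j (by omega)
    have := dist_triangle_right (x i) (x j) (z (σ n))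
    linarith
  obtain ⟨y, hy⟩ := cauchySeq_tendsto_of_complete hc
  refine hx y fun n => ?_
  refine le_of_tendsto (hy.dist tendsto_const_nhds) ?_
  filter_upwards [eventually_gt_atTop n] with m hm using hb n m hm

lemma lc_step [CompleteSpace X] {U : Type*} (z : ℕ → X) (F : (ℕ → ℕ) → U) (hF : LCst F)
    (T : U → U → Prop) (hT : ∀ u, T u u) (S : X → U → Prop)
    (H : ∀ σ x, compat z σ x → ∃ y, T (F σ) y ∧ ∃ κ > 0, ∀ x', dist x x' < κ → S x' y) :
    ∃ f : (ℕ → ℕ) → U, LCst f ∧ (∀ σ, T (F σ) (f σ)) ∧ ∀ σ x, compat z σ x → S x (f σ) := by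
  obtain ⟨f, hf, hR⟩ := lc_select (fun σ y => T (F σ) y ∧ ∀ x, compat z σ x → S x y) (fun σ => by
    obtain ⟨m, hm⟩ := hF σ
    by_cases hx : ∃ x, compat z σ x
    · obtain ⟨x, hx⟩ := hx
      obtain ⟨y, hy, κ, hκ, hS⟩ := H σ x hx
      obtain ⟨m', hm'⟩ := compat_near z hx hκ
      refine ⟨y, max m m', fun σ' hσ' => ⟨?_, fun x' hx' => hS x' (hm' σ' (hσ'.le (le_max_right _ _)) x' hx')⟩⟩
      rw [hm σ' (hσ'.le (le_max_left _ _))]; exact hy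
    · push Not at hx
      obtain ⟨m', hm'⟩ := compat_incompat z hx
      refine ⟨F σ, max m m', fun σ' hσ' =>
        ⟨?_, fun x' hx' => absurd hx' (hm' σ' (hσ'.le (le_max_right _ _)) x')⟩⟩
      rw [hm σ' (hσ'.le (le_max_left _ _))]; exact hT _)
  exact ⟨f, hf, fun σ => (hR σ).1, fun σ => (hR σ).2⟩

/-- zero-dimensional selection -/
lemma zero_dim_selection [CompleteSpace X] {U : Type*} [MetricSpace U] [CompleteSpace U] [Nonempty U]
    (z : ℕ → X) (e : ℝ) (he : 0 < e) (Init : X → U → Prop) (Good : ℕ → X → U → Prop)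
    (H0 : ∀ x, ∃ y, ∃ κ > 0, ∀ x', dist x x' < κ → Good 0 x' y ∧ Init x' y)
    (Hs : ∀ n x u, Good n x u → ∃ y, dist u y < e / 2 ^ n ∧ ∃ κ > 0, ∀ x', dist x x' < κ → Good (n + 1) x' y) :
    ∃ φ : (ℕ → ℕ) → U, (∀ σ, ∀ ε > 0, ∃ m, ∀ σ', agree σ σ' m → dist (φ σ') (φ σ) < ε) ∧
      ∀ σ x, compat z σ x → ∃ u : ℕ → U, (∀ n, Good n x (u n)) ∧ Init x (u 0) ∧
        ∀ n, dist (u n) (φ σ) ≤ 2 * e / 2 ^ n := by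
  obtain ⟨F0, hF0, -, hG0⟩ := lc_step z (fun _ => Classical.arbitrary U) (fun _ => ⟨0, fun _ _ => rfl⟩)
    (fun _ _ => True) (fun _ => trivial) (fun x y => Good 0 x y ∧ Init x y)
    (fun σ x _ => by
      obtain ⟨y, κ, hκ, h⟩ := H0 x
      exact ⟨y, trivial, κ, hκ, h⟩)
  have step : ∀ (n : ℕ) (F : {F : (ℕ → ℕ) → U // LCst F ∧ ∀ σ x, compat z σ x → Good n x (F σ)}),
      ∃ f : (ℕ → ℕ) → U, LCst f ∧ (∀ σ, dist (F.1 σ) (f σ) < e / 2 ^ n) ∧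
        ∀ σ x, compat z σ x → Good (n + 1) x (f σ) := fun n F =>
    lc_step z F.1 F.2.1 (fun u y => dist u y < e / 2 ^ n) (fun u => by rw [dist_self]; positivity)
      (Good (n + 1)) (fun σ x hx => Hs n x _ (F.2.2 σ x hx))
  choose G hG1 hG2 hG3 using step
  let seq : ∀ n, {F : (ℕ → ℕ) → U // LCst F ∧ ∀ σ x, compat z σ x → Good n x (F σ)} := fun n =>
    Nat.rec ⟨F0, hF0, fun σ x hx => (hG0 σ x hx).1⟩ (fun n F => ⟨G n F, hG1 n F, hG3 n F⟩) n
  have hd : ∀ σ n, dist ((seq n).1 σ) ((seq (n + 1)).1 σ) ≤ 2 * e / 2 / 2 ^ n := fun σ n => by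
    have := (hG2 n (seq n) σ).le
    rw [mul_div_cancel_left₀ _ (by norm_num : (2 : ℝ) ≠ 0)]
    exact this
  have hlim : ∀ σ, ∃ y, Tendsto (fun n => (seq n).1 σ) atTop (𝓝 y) := fun σ =>
    cauchySeq_tendsto_of_complete (cauchySeq_of_le_geometric_two (hd σ))
  choose φ hφ using hlim
  have hdist : ∀ σ n, dist ((seq n).1 σ) (φ σ) ≤ 2 * e / 2 ^ n := fun σ n =>
    dist_le_of_le_geometric_two_of_tendsto (hd σ) (hφ σ) n
  refine ⟨φ, fun σ ε hε => ?_, fun σ x hx => ⟨fun n => (seq n).1 σ, fun n => (seq n).2.2 σ x hx,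
    (hG0 σ x hx).2, hdist σ⟩⟩
  obtain ⟨n, hn⟩ := exists_pow_lt_of_lt_one (by positivity : 0 < ε / (4 * e)) (by norm_num : (1 / 2 : ℝ) < 1)
  obtain ⟨m, hm⟩ := (seq n).2.1 σ
  refine ⟨m, fun σ' h => ?_⟩
  have h1 := hdist σ n
  have h2 := hdist σ' n
  rw [hm σ' h] at h2
  have h3 := dist_triangle_left (φ σ') (φ σ) ((seq n).1 σ)
  have h4 : 2 * e / 2 ^ n < ε / 2 := by
    rw [lt_div_iff₀ (by positivity)] at hn
    have : 2 * e / 2 ^ n = (1 / 2) ^ n * (4 * e) / 2 := by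
      rw [one_div, inv_pow]; field_simp; norm_num
    rw [this]; linarith
  linarith

lemma osc_bound {U : Type*} [MetricSpace U] (φ : (ℕ → ℕ) → U)
    (hφ : ∀ σ, ∀ ε > 0, ∃ m, ∀ σ', agree σ σ' m → dist (φ σ') (φ σ) < ε) (J : ℕ → ℕ) (ε : ℝ) (hε : 0 < ε) :
    ∃ M, ∀ σ, (∀ n < M, σ n ≤ J n) → ∀ σ', agree σ σ' M → dist (φ σ) (φ σ') ≤ ε := by
  have hK : IsCompact (Set.pi Set.univ fun n => Set.Iic (J n)) :=
    isCompact_univ_pi fun n => (Set.finite_Iic (J n)).isCompact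
  choose m hm using fun σ => hφ σ (ε / 2) (by positivity)
  obtain ⟨t, _, ht⟩ := hK.elim_nhds_subcover (fun σ => {σ' | agree σ σ' (m σ)})
    (fun σ _ => (agree_open σ (m σ)).mem_nhds agree.rfl)
  refine ⟨t.sup m, fun σ hσ σ' hσ' => ?_⟩
  set τ : ℕ → ℕ := fun n => if n < t.sup m then σ n else 0 with hτ
  have hτσ : agree σ τ (t.sup m) := fun i hi => if_pos hi
  have hτK : τ ∈ Set.pi Set.univ fun n => Set.Iic (J n) := fun n _ => by
    by_cases h : n < t.sup m
    · show (if n < t.sup m then σ n else 0) ≤ J n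
      rw [if_pos h]; exact hσ n h
    · show (if n < t.sup m then σ n else 0) ≤ J n
      rw [if_neg h]; exact Nat.zero_le _
  obtain ⟨s, hs, h1⟩ := Set.mem_iUnion₂.1 (ht hτK)
  have h1 : agree s τ (m s) := h1
  have hms : m s ≤ t.sup m := Finset.le_sup hs
  have h2 : agree s σ (m s) := h1.trans (hτσ.symm.le hms)
  have h3 := hm s σ h2
  have h4 := hm s σ' (h2.trans (hσ'.le hms))
  have := dist_triangle_right (φ σ) (φ σ') (φ s)
  linarith

lemma code_exists {h : ℝ → X} (hh : StronglyMeasurable h) (H : WP h) (z : ℕ → X)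
    (hz : ∀ t, ∀ ε > 0, ∃ k, dist (h t) (z k) < ε) :
    ∃ K : ℝ → ℕ → ℕ, StronglyMeasurable K ∧ (∀ t, compat z (K t) (h t)) ∧
      ∀ {U : Type*} [MetricSpace U] (φ : (ℕ → ℕ) → U),
        (∀ σ, ∀ ε > 0, ∃ m, ∀ σ', agree σ σ' m → dist (φ σ') (φ σ) < ε) → SubD h (fun t => φ (K t)) := by
  classical
  choose r hr0 hr1 hgen using fun n : ℕ => generic_radius hh H z 0 ((1 / 2 : ℝ) ^ n) (by positivity)
  have hdm : ∀ k, Measurable (fun t => dist (h t) (z k)) := fun k =>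
    (hh.dist stronglyMeasurable_const).measurable
  set K : ℝ → ℕ → ℕ := fun t n => Nat.find (hz t (r n) (hr0 n)) with hK
  have hk1 : ∀ n t, dist (h t) (z (K t n)) < r n := fun n t => Nat.find_spec (hz t (r n) (hr0 n))
  have hk2 : ∀ n t k, dist (h t) (z k) < r n → K t n ≤ k := fun n t k hk =>
    Nat.find_min' (hz t (r n) (hr0 n)) hk
  refine ⟨K, ?_, fun t n => ((hk1 n t).trans (hr1 n)).le, ?_⟩
  · refine Measurable.stronglyMeasurable (measurable_pi_lambda _ fun n => ?_)
    exact measurable_find (p := fun t k => dist (h t) (z k) < r n) (fun t => hz t (r n) (hr0 n))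
      fun k => measurableSet_lt (hdm k) measurable_const
  · intro U _ φ hφ ε hε
    choose κ hκ B hBm hBs J hJ hB using fun n : ℕ => index_sub hh H z hz (r n) (hr0 n) (hgen n)
      (fun t => K t n) (hk1 n) (hk2 n) (ε / 2 / 2 ^ n) (by positivity)
    obtain ⟨M, hM⟩ := osc_bound φ hφ J ε hε
    obtain ⟨q, hq, hqle⟩ : ∃ q > 0, ∀ n ∈ Finset.range (M + 1), q ≤ κ n := by
      obtain ⟨i, _, hi⟩ := (Finset.range (M + 1)).exists_min_image κ ⟨0, by simp⟩
      exact ⟨κ i, hκ i, hi⟩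
    refine ⟨q, hq, ⋃ n ∈ Finset.range M, B n, Finset.measurableSet_biUnion _ fun n _ => hBm n, ?_, ?_⟩
    · refine (SmallD.biUnion (Finset.range M) (e := fun n => ε / 2 / 2 ^ n) (fun n => by positivity)
        (fun n _ => hBs n) hBm).le ?_
      have h1 := (summable_geometric_two' ε).sum_le_tsum (Finset.range M) (fun n _ => by positivity)
      rwa [tsum_geometric_two'] at h1
    · intro t t' ht ht' hd
      simp only [Set.mem_iUnion, not_exists] at ht ht'
      refine (bdist_le_dist _ _).trans (hM (K t) (fun n hn => ?_) (K t') fun n hn => ?_)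
      · exact hJ n t (ht n (Finset.mem_range.2 hn))
      · refine (hB n t t' (ht n (Finset.mem_range.2 hn)) (ht' n (Finset.mem_range.2 hn)) ?_).symm
        exact hd.trans_le (hqle n (by simp; omega))

end


section
variable {U : Type*} [MetricSpace U] [MeasurableSpace U] [BorelSpace U]

lemma lp_ineq {P Q : LevyProkhorov (ProbabilityMeasure U)} {κ : ℝ} (h : dist P Q < κ) {B : Set U}
    (hB : MeasurableSet B) :
    (P.toMeasure : Measure U) B ≤ (Q.toMeasure : Measure U) (Metric.thickening κ B) + ENNReal.ofReal κ := by
  have hκ : 0 ≤ κ := dist_nonneg.trans h.le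
  have h1 : levyProkhorovEDist (P.toMeasure : Measure U) (Q.toMeasure : Measure U) < ENNReal.ofReal κ := by
    rw [← LevyProkhorov.edist_probabilityMeasure_def, edist_dist]
    exact (ENNReal.ofReal_lt_ofReal_iff (dist_nonneg.trans_lt h)).2 h
  have := left_measure_le_of_levyProkhorovEDist_lt h1 hB
  rwa [ENNReal.toReal_ofReal hκ] at this

lemma lp_ball {P Q : LevyProkhorov (ProbabilityMeasure U)} {κ : ℝ} (h : dist P Q < κ) (y : U) (r : ℝ) :
    (P.toMeasure : Measure U) (Metric.ball y r) ≤
      (Q.toMeasure : Measure U) (Metric.ball y (r + κ)) + ENNReal.ofReal κ := by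
  refine (lp_ineq h Metric.isOpen_ball.measurableSet).trans ?_
  gcongr
  intro x hx
  obtain ⟨w, hw, hxw⟩ := Metric.mem_thickening_iff.1 hx
  have := dist_triangle x w y
  rw [Metric.mem_ball] at hw ⊢
  linarith

lemma cthick_compl (K : Set U) (κ : ℝ) : Metric.thickening κ (Metric.cthickening κ K)ᶜ ⊆ Kᶜ := by
  intro x hx hxK
  obtain ⟨w, hw, hxw⟩ := Metric.mem_thickening_iff.1 hx
  exact hw (Metric.mem_cthickening_of_dist_le w x κ K hxK (by rw [dist_comm]; exact hxw.le))

variable [CompleteSpace U] [SeparableSpace U]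

lemma lp_tight (P : ℕ → LevyProkhorov (ProbabilityMeasure U)) (hP : CauchySeq P) :
    IsTightMeasureSet {((μ : ProbabilityMeasure U) : Measure U) | μ ∈ Set.range fun n => (P n).toMeasure} := by
  haveI : SecondCountableTopology U := UniformSpace.secondCountable_of_separable U
  rw [isTightMeasureSet_iff_exists_isCompact_measure_compl_le]
  intro ε hε
  obtain ⟨η, hη0, hη⟩ := ENNReal.exists_pos_sum_of_countable hε.ne' ℕ
  have key : ∀ m : ℕ, ∃ K : Set U, IsCompact K ∧ ∃ κ : ℝ, 0 < κ ∧ κ < 1 / ((m : ℝ) + 1) ∧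
      ∀ n, ((P n).toMeasure : Measure U) (Metric.cthickening κ K)ᶜ ≤ η m := by
    intro m
    obtain ⟨κ, hκ0, hκ⟩ := exists_between (show 0 < min ((η m : ℝ) / 2) (1 / ((m : ℝ) + 1)) from
      lt_min (by have := hη0 m; positivity) (by positivity))
    obtain ⟨N, hN⟩ := Metric.cauchySeq_iff'.1 hP κ hκ0
    have h1 : ∀ i, ∃ K : Set U, IsCompact K ∧ ((P i).toMeasure : Measure U) Kᶜ ≤ ENNReal.ofReal κ := by
      intro i
      obtain ⟨K, hK, h⟩ := isTightMeasureSet_iff_exists_isCompact_measure_compl_le.1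
        (isTightMeasureSet_singleton (μ := ((P i).toMeasure : Measure U))) (ENNReal.ofReal κ)
        (ENNReal.ofReal_pos.2 hκ0)
      exact ⟨K, hK, h _ rfl⟩
    choose K hK hKP using h1
    have h2 : ENNReal.ofReal κ + ENNReal.ofReal κ ≤ η m := by
      rw [← ENNReal.ofReal_add hκ0.le hκ0.le]
      refine ENNReal.ofReal_le_of_le_toReal ?_
      have := hκ.trans_le (min_le_left _ _)
      simp only [ENNReal.coe_toReal]
      linarith
    have h3 : ∀ i ≤ N, ((P i).toMeasure : Measure U) (⋃ i ∈ Finset.range (N + 1), K i)ᶜ ≤ ENNReal.ofReal κ := by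
      intro i hi
      refine (measure_mono ?_).trans (hKP i)
      refine Set.compl_subset_compl.2 (Set.subset_biUnion_of_mem (u := K) ?_)
      simp; omega
    refine ⟨⋃ i ∈ Finset.range (N + 1), K i, (Finset.range (N + 1)).isCompact_biUnion fun i _ => hK i, κ, hκ0,
      hκ.trans_le (min_le_right _ _), fun n => ?_⟩
    rcases le_total n N with hn | hn
    · refine (measure_mono (Set.compl_subset_compl.2 (Metric.self_subset_cthickening _))).trans ?_
      exact (h3 n hn).trans (le_self_add.trans h2)
    · refine (lp_ineq (hN n hn) Metric.isClosed_cthickening.isOpen_compl.measurableSet).trans ?_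
      refine le_trans ?_ h2
      gcongr
      exact (measure_mono (cthick_compl _ _)).trans (h3 N le_rfl)
  choose K hK κ hκ0 hκ1 hb using key
  refine ⟨⋂ m, Metric.cthickening (κ m) (K m), ?_, ?_⟩
  · refine TotallyBounded.isCompact_of_isClosed ?_ (isClosed_iInter fun _ => Metric.isClosed_cthickening)
    refine Metric.totallyBounded_iff.2 fun d hd => ?_
    obtain ⟨m, hm⟩ := exists_nat_one_div_lt (show (0 : ℝ) < d / 2 by positivity)
    obtain ⟨t, ht, hc⟩ := Metric.totallyBounded_iff.1 (hK m).totallyBounded (d / 2) (by positivity)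
    refine ⟨t, ht, fun x hx => ?_⟩
    have hx1 := Metric.cthickening_subset_thickening' (by positivity : 0 < d / 2) ((hκ1 m).trans hm) (K m)
      (Set.mem_iInter.1 hx m)
    obtain ⟨w, hw, hxw⟩ := Metric.mem_thickening_iff.1 hx1
    obtain ⟨y, hy, hwy⟩ := Set.mem_iUnion₂.1 (hc hw)
    refine Set.mem_iUnion₂.2 ⟨y, hy, ?_⟩
    rw [Metric.mem_ball] at hwy ⊢
    have := dist_triangle x w y
    linarith
  · rintro _ ⟨_, ⟨n, rfl⟩, rfl⟩
    rw [Set.compl_iInter]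
    exact (measure_iUnion_le _).trans ((ENNReal.tsum_le_tsum fun m => hb m n).trans hη.le)

lemma lp_complete : CompleteSpace (LevyProkhorov (ProbabilityMeasure U)) := by
  haveI : SecondCountableTopology U := UniformSpace.secondCountable_of_separable U
  refine Metric.complete_of_cauchySeq_tendsto fun P hP => ?_
  have hc := isCompact_closure_of_isTightMeasureSet (lp_tight P hP)
  have hc2 := hc.image (LevyProkhorov.probabilityMeasureHomeomorph (Ω := U)).continuous
  obtain ⟨a, _, ψ, hψ, hlim⟩ := hc2.tendsto_subseq (x := P) fun n =>
    ⟨(P n).toMeasure, subset_closure ⟨n, rfl⟩, rfl⟩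
  exact ⟨a, tendsto_nhds_of_cauchySeq_of_subseq hP hψ.tendsto_atTop hlim⟩

end


section
variable {U : Type*} [MetricSpace U] [SeparableSpace U] [MeasurableSpace U] [BorelSpace U]

lemma supp_point (μ : Measure U) {S : Set U} (hS : 0 < μ S) : ∃ y ∈ S, y ∈ measSupport μ := by
  have : SecondCountableTopology U := UniformSpace.secondCountable_of_separable U
  by_contra! hc
  refine hS.ne' (measure_null_of_locally_null S fun x hx => ?_)
  have h1 := hc x hx
  simp only [measSupport, Set.mem_setOf_eq, not_forall] at h1
  obtain ⟨V, hV, hxV, h0⟩ := h1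
  exact ⟨V, mem_nhdsWithin_of_mem_nhds (hV.mem_nhds hxV), le_antisymm (not_lt.1 h0) zero_le⟩

lemma supp_ball {μ : Measure U} {y : U} (hy : y ∈ measSupport μ) {r : ℝ} (hr : 0 < r) :
    0 < μ (Metric.ball y r) := hy _ Metric.isOpen_ball (Metric.mem_ball_self hr)

lemma pos_near (P : LevyProkhorov (ProbabilityMeasure U)) (y : U) {r : ℝ} (hr : 0 < r)
    (h : 0 < (P.toMeasure : Measure U) (Metric.ball y (r / 2))) :
    ∃ κ > 0, ∀ P', dist P P' < κ → 0 < (P'.toMeasure : Measure U) (Metric.ball y r) := by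
  set c := ((P.toMeasure : Measure U) (Metric.ball y (r / 2))).toReal with hc
  have hc0 : 0 < c := ENNReal.toReal_pos h.ne' (measure_ne_top _ _)
  refine ⟨min (r / 2) (c / 2), by positivity, fun P' hP' => ?_⟩
  have h1 := lp_ball hP' y (r / 2)
  have h2 : (P'.toMeasure : Measure U) (Metric.ball y (r / 2 + min (r / 2) (c / 2)))
      ≤ (P'.toMeasure : Measure U) (Metric.ball y r) := by
    refine measure_mono (Metric.ball_subset_ball ?_)
    have := min_le_left (r / 2) (c / 2)
    linarith
  refine pos_iff_ne_zero.2 fun h0 => ?_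
  rw [h0] at h2
  rw [le_antisymm h2 zero_le, zero_add, ← ENNReal.ofReal_toReal (measure_ne_top _ (Metric.ball y (r / 2))), ← hc,
    ENNReal.ofReal_le_ofReal_iff (by positivity)] at h1
  have := min_le_right (r / 2) (c / 2)
  linarith

lemma rd_nonempty (P : ProbabilityMeasure U) (u : U) {δ : ℝ} (hδ : δ < 1) :
    {r : ℝ | 0 < r ∧ ENNReal.ofReal δ < (P : Measure U) (Metric.ball u r)}.Nonempty := by
  have h1 : Tendsto (fun n : ℕ => (P : Measure U) (Metric.ball u (n : ℝ))) atTop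
      (𝓝 ((P : Measure U) (⋃ n : ℕ, Metric.ball u (n : ℝ)))) :=
    tendsto_measure_iUnion_atTop fun a b hab => Metric.ball_subset_ball (by exact_mod_cast hab)
  rw [Metric.iUnion_ball_nat, measure_univ] at h1
  have h2 := (h1.eventually (lt_mem_nhds (show ENNReal.ofReal δ < 1 by
    rw [ENNReal.ofReal_lt_one]; exact hδ))).and (eventually_gt_atTop 0)
  obtain ⟨n, hn, hn0⟩ := h2.exists
  exact ⟨n, by exact_mod_cast hn0, hn⟩

lemma rd_semi (P P' : LevyProkhorov (ProbabilityMeasure U)) (u u' : U) {δ κ : ℝ} (hδ0 : 0 < δ) (hδ : δ < 1)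
    (hκ0 : 0 < κ) (hκ : κ ≤ δ / 8) (hP : dist P P' < κ) (hu : dist u u' < κ) :
    rdelta u (P.toMeasure : Measure U) (δ / 2) ≤ rdelta u' (P'.toMeasure : Measure U) δ + 2 * κ := by
  rw [← sub_le_iff_le_add]
  refine le_csInf (rd_nonempty _ _ hδ) fun r hr => ?_
  rw [sub_le_iff_le_add]
  refine csInf_le ⟨0, fun r hr => hr.1.le⟩ ⟨by linarith [hr.1], ?_⟩
  have h1 := lp_ball (by rwa [dist_comm] at hP) u' r
  have h2 : (P.toMeasure : Measure U) (Metric.ball u' (r + κ)) ≤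
      (P.toMeasure : Measure U) (Metric.ball u (r + 2 * κ)) :=
    measure_mono (Metric.ball_subset_ball' (by rw [dist_comm]; linarith))
  by_contra! h3
  have h4 : ENNReal.ofReal δ < ENNReal.ofReal (δ / 2) + ENNReal.ofReal κ :=
    hr.2.trans_le (h1.trans (by gcongr; exact h2.trans h3))
  rw [← ENNReal.ofReal_add (by positivity) hκ0.le, ENNReal.ofReal_lt_ofReal_iff (by positivity)] at h4
  linarith

lemma meas_H0 {δ : ℝ} (hδ0 : 0 < δ) (hδ : δ < 1) (x : U × LevyProkhorov (ProbabilityMeasure U)) :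
    ∃ y, ∃ κ > 0, ∀ x' : U × LevyProkhorov (ProbabilityMeasure U), dist x x' < κ →
      0 < (x'.2.toMeasure : Measure U) (Metric.ball y (δ / 8 / 2 ^ 0)) ∧
      dist x'.1 y + 3 * (δ / 8) < rdelta x'.1 (x'.2.toMeasure : Measure U) δ + δ := by
  obtain ⟨r, hr, hrl⟩ := exists_lt_of_csInf_lt (rd_nonempty x.2.toMeasure x.1 (show δ / 2 < 1 by linarith))
    (show rdelta x.1 (x.2.toMeasure : Measure U) (δ / 2) < rdelta x.1 (x.2.toMeasure : Measure U) (δ / 2) + δ / 8 by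
      linarith)
  obtain ⟨y, hy, hys⟩ := supp_point (x.2.toMeasure : Measure U) (pos_of_gt hr.2)
  obtain ⟨κ, hκ, h⟩ := pos_near x.2 y (show 0 < δ / 8 / 2 ^ 0 by positivity) (supp_ball hys (by positivity))
  refine ⟨y, min κ (δ / 8), by positivity, fun x' hx' => ?_⟩
  rw [Prod.dist_eq, max_lt_iff] at hx'
  refine ⟨h _ (hx'.2.trans_le (min_le_left _ _)), ?_⟩
  have h1 := rd_semi x.2 x'.2 x.1 x'.1 hδ0 hδ (show 0 < δ / 8 by positivity) le_rfl
    (hx'.2.trans_le (min_le_right _ _)) (hx'.1.trans_le (min_le_right _ _))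
  have h2 := dist_triangle_left x'.1 y x.1
  have h3 := hx'.1.trans_le (min_le_right _ _)
  rw [Metric.mem_ball, dist_comm] at hy
  linarith

lemma meas_Hs {e : ℝ} (he : 0 < e) (n : ℕ) (x : U × LevyProkhorov (ProbabilityMeasure U)) (u : U)
    (hg : 0 < (x.2.toMeasure : Measure U) (Metric.ball u (e / 2 ^ n))) :
    ∃ y, dist u y < e / 2 ^ n ∧ ∃ κ > 0, ∀ x' : U × LevyProkhorov (ProbabilityMeasure U), dist x x' < κ →
      0 < (x'.2.toMeasure : Measure U) (Metric.ball y (e / 2 ^ (n + 1))) := by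
  obtain ⟨y, hy, hys⟩ := supp_point (x.2.toMeasure : Measure U) hg
  obtain ⟨κ, hκ, h⟩ := pos_near x.2 y (show 0 < e / 2 ^ (n + 1) by positivity) (supp_ball hys (by positivity))
  refine ⟨y, by rwa [Metric.mem_ball, dist_comm] at hy, κ, hκ, fun x' hx' => ?_⟩
  rw [Prod.dist_eq, max_lt_iff] at hx'
  exact h _ hx'.2

lemma meas_selection [CompleteSpace U] [Nonempty U] {δ : ℝ} (hδ0 : 0 < δ) (hδ : δ < 1)
    (z : ℕ → U × LevyProkhorov (ProbabilityMeasure U)) :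
    ∃ φ : (ℕ → ℕ) → U, (∀ σ, ∀ ε > 0, ∃ m, ∀ σ', agree σ σ' m → dist (φ σ') (φ σ) < ε) ∧
      ∀ σ x, compat z σ x → φ σ ∈ measSupport (x.2.toMeasure : Measure U) ∧
        dist (φ σ) x.1 < rdelta x.1 (x.2.toMeasure : Measure U) δ + δ := by
  have hC : CompleteSpace (LevyProkhorov (ProbabilityMeasure U)) := lp_complete
  have he : 0 < δ / 8 := by positivity
  obtain ⟨φ, hφ, h⟩ := zero_dim_selection z (δ / 8) he
    (fun x y => dist x.1 y + 3 * (δ / 8) < rdelta x.1 (x.2.toMeasure : Measure U) δ + δ)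
    (fun n x y => 0 < (x.2.toMeasure : Measure U) (Metric.ball y (δ / 8 / 2 ^ n)))
    (fun x => meas_H0 hδ0 hδ x) (fun n x u hg => meas_Hs he n x u hg)
  refine ⟨φ, hφ, fun σ x hx => ?_⟩
  obtain ⟨u, h1, h2, h3⟩ := h σ x hx
  constructor
  · intro V hV hxV
    obtain ⟨s, hs, hsV⟩ := Metric.isOpen_iff.1 hV _ hxV
    obtain ⟨n, hn⟩ := exists_pow_lt_of_lt_one (show 0 < s / (3 * (δ / 8)) by positivity)
      (by norm_num : (1 / 2 : ℝ) < 1)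
    refine (h1 n).trans_le (measure_mono (Set.Subset.trans ?_ hsV))
    refine Metric.ball_subset_ball' ?_
    have h4 := h3 n
    rw [lt_div_iff₀ (by positivity), one_div, inv_pow] at hn
    have h5 : δ / 8 / 2 ^ n + 2 * (δ / 8) / 2 ^ n = (2 ^ n)⁻¹ * (3 * (δ / 8)) := by field_simp; ring
    linarith
  · have h4 := h3 0
    have h5 := dist_triangle_right (φ σ) x.1 (u 0)
    rw [dist_comm (φ σ) (u 0)] at h5
    rw [pow_zero, div_one] at h4
    linarith

end


lemma shift_ae {N : ℝ → Prop} (hN : ∀ᵐ t ∂(volume : Measure ℝ), N t) (s : ℝ) :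
    ∀ᵐ t ∂(volume : Measure ℝ), N (t + s) :=
  (measurePreserving_add_right (volume : Measure ℝ) s).quasiMeasurePreserving.ae hN

lemma weylD_transfer {α β : Type*} {d : α → α → ℝ} {d' : β → β → ℝ} {f : ℝ → α} {k : ℝ → β} {N : ℝ → Prop}
    (hN : ∀ᵐ t ∂(volume : Measure ℝ), N t) (h : ∀ t t', N t → N t' → d (f t) (f t') = d' (k t) (k t'))
    (l s : ℝ) : weylD d 1 l f (fun t => f (t + s)) = weylD d' 1 l k (fun t => k (t + s)) := by
  unfold weylD
  congr 1
  refine iSup_congr fun ξ => ?_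
  congr 1
  refine lintegral_congr_ae (ae_restrict_of_ae ?_)
  filter_upwards [hN, shift_ae hN s] with t h1 h2
  rw [h t (t + s) h1 h2]

lemma weylDinf_transfer {α β : Type*} {d : α → α → ℝ} {d' : β → β → ℝ} {f : ℝ → α} {k : ℝ → β} {N : ℝ → Prop}
    (hN : ∀ᵐ t ∂(volume : Measure ℝ), N t) (h : ∀ t t', N t → N t' → d (f t) (f t') = d' (k t) (k t'))
    (s : ℝ) : weylDinf d 1 f (fun t => f (t + s)) = weylDinf d' 1 k (fun t => k (t + s)) := by
  unfold weylDinf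
  simp_rw [weylD_transfer hN h]

lemma WP_transfer {α X : Type*} [MetricSpace X] {d : α → α → ℝ} {f : ℝ → α} {k : ℝ → X} {N : ℝ → Prop}
    (hN : ∀ᵐ t ∂(volume : Measure ℝ), N t) (h : ∀ t t', N t → N t' → d (f t) (f t') = bdist (k t) (k t'))
    (H : ∀ ε > 0, ∃ l > 0, RelDense (APeriodsL d 1 l ε f)) : WP k := by
  refine WP_of fun ε hε => ?_
  obtain ⟨l, hl, h1⟩ := H ε hε
  refine ⟨l, hl, ?_⟩
  have : APeriodsL bdist 1 l ε k = APeriodsL d 1 l ε f := by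
    unfold APeriodsL
    simp_rw [weylD_transfer hN h]
  rwa [this]

lemma mem_WMod_of_bound {α X : Type*} [MetricSpace X] {d : α → α → ℝ} {f : ℝ → α} {k : ℝ → X} {N : ℝ → Prop}
    (hN : ∀ᵐ t ∂(volume : Measure ℝ), N t) (h : ∀ t t', N t → N t' → d (f t) (f t') = bdist (k t) (k t'))
    {a C : ℝ} (H : ∀ τ : ℝ, ‖Complex.exp (((a * τ : ℝ) : ℂ) * Complex.I) - 1‖ ≤ C * (eI k τ).toReal) :
    a ∈ WMod d f := by
  intro τ hτ
  simp_rw [weylDinf_transfer hN h, weylDinf_eq] at hτ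
  have h1 : Tendsto (fun j => (eI k (τ j)).toReal) atTop (𝓝 0) := by
    have := (ENNReal.tendsto_toReal ENNReal.zero_ne_top).comp hτ
    rw [ENNReal.toReal_zero] at this
    exact this
  rw [tendsto_iff_norm_sub_tendsto_zero]
  refine squeeze_zero (fun j => norm_nonneg _) (fun j => ?_) (by simpa using h1.const_mul C)
  rw [mul_comm Complex.I]
  exact H (τ j)

lemma lpDist_le_one {U : Type*} [MeasurableSpace U] [PseudoEMetricSpace U] (P Q : ProbabilityMeasure U) :
    lpDist P Q ≤ 1 := by
  have h := levyProkhorovEDist_le_max_measure_univ (P : Measure U) (Q : Measure U)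
  rw [measure_univ, measure_univ, max_self] at h
  have := ENNReal.toReal_mono ENNReal.one_ne_top h
  simpa [lpDist, levyProkhorovDist] using this

/-- **Theorem 2 (selections of supports of Weyl a.p. measure-valued functions).**
Let `(U,ρ)` be a complete separable metric space, `g ∈ W(ℝ,U)`,
`μ[·;·] ∈ W₁(ℝ, 𝓜(U))` (Weyl a.p. w.r.t. the Lévy–Prokhorov metric).  Then for every
`δ ∈ (0,1)` there is `f_δ ∈ W(ℝ,U)` with `Mod f_δ ⊆ Mod g + Mod μ[·;·]`,
`f_δ(t) ∈ supp μ[·;t]` a.e. and `ρ(f_δ(t), g(t)) < r_δ(g(t), μ[·;t]) + δ` a.e. -/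
theorem weyl_ap_measure_selection {U : Type*} [MetricSpace U] [CompleteSpace U]
    [TopologicalSpace.SeparableSpace U] [MeasurableSpace U] [BorelSpace U] (x₀ : U)
    (g : ℝ → U) (hg : MemWp bdist 1 x₀ g)
    (μ : ℝ → ProbabilityMeasure U)
    (hμ : MemWp lpDist 1
      (⟨MeasureTheory.Measure.dirac x₀, inferInstance⟩ : ProbabilityMeasure U) μ)
    (δ : ℝ) (hδ0 : 0 < δ) (hδ1 : δ < 1) :
    ∃ f : ℝ → U, MemWp bdist 1 x₀ f ∧
      WMod bdist f ⊆ WMod bdist g + WMod (fun μ' ν' => min 1 (lpDist μ' ν')) μ ∧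
      (∀ᵐ t ∂(volume : Measure ℝ), f t ∈ measSupport (μ t : Measure U)) ∧
      (∀ᵐ t ∂(volume : Measure ℝ),
        dist (f t) (g t) < rdelta (g t) (μ t : Measure U) δ + δ) := by
  have hsc : SecondCountableTopology U := UniformSpace.secondCountable_of_separable U
  have hne : Nonempty U := ⟨x₀⟩
  obtain ⟨⟨⟨g', hg'm, hgg'⟩, -⟩, hgW⟩ := hg
  obtain ⟨⟨⟨μ', hμ'm, hμμ'⟩, -⟩, hμW⟩ := hμ
  set m : ℝ → LevyProkhorov (ProbabilityMeasure U) := fun t => LevyProkhorov.ofMeasure (μ' t) with hm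
  have hmm : StronglyMeasurable m :=
    (LevyProkhorov.probabilityMeasureHomeomorph (Ω := U)).continuous.comp_stronglyMeasurable hμ'm
  have tg : ∀ t t', g t = g' t → g t' = g' t' → bdist (g t) (g t') = bdist (g' t) (g' t') :=
    fun t t' h1 h2 => by rw [h1, h2]
  have tm2 : ∀ t t', μ t = μ' t → μ t' = μ' t' → min 1 (lpDist (μ t) (μ t')) = bdist (m t) (m t') :=
    fun t t' h1 h2 => by rw [h1, h2]; rfl
  have tm1 : ∀ t t', μ t = μ' t → μ t' = μ' t' → lpDist (μ t) (μ t') = bdist (m t) (m t') :=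
    fun t t' h1 h2 => by rw [← tm2 t t' h1 h2, min_eq_right (lpDist_le_one _ _)]
  have Wg : WP g' := WP_transfer hgg' tg hgW
  have Wm : WP m := WP_transfer hμμ' tm1 hμW
  have hh : StronglyMeasurable (fun t => (g' t, m t)) := hg'm.prodMk hmm
  have Wh : WP (fun t => (g' t, m t)) := WP_prod hg'm hmm Wg Wm
  obtain ⟨z, hz⟩ := _root_.exists_dense_seq hh
  obtain ⟨φ, hφ, hsel⟩ := meas_selection hδ0 hδ1 z
  obtain ⟨K, hKm, hKc, hKS⟩ := _root_.code_exists hh Wh z hz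
  have hS := hKS φ hφ
  have hφc : Continuous φ := by
    refine Metric.continuous_iff'.2 fun σ ε hε => ?_
    obtain ⟨n, hn⟩ := hφ σ ε hε
    filter_upwards [(agree_open σ n).mem_nhds agree.rfl] with σ' h
    exact hn σ' h
  have hfm : StronglyMeasurable (fun t => φ (K t)) := hφc.comp_stronglyMeasurable hKm
  refine ⟨fun t => φ (K t), ⟨⟨hfm.aestronglyMeasurable, 1, fun ξ => ?_⟩, of_WP (hS.WP hh Wh)⟩, ?_, ?_, ?_⟩
  · calc ∫⁻ t in Set.Icc ξ (ξ + 1), ENNReal.ofReal (bdist (φ (K t)) x₀ ^ (1 : ℝ))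
        ≤ ∫⁻ t in Set.Icc ξ (ξ + 1), 1 := by
          refine lintegral_mono fun t => ?_
          rw [Real.rpow_one]
          exact ENNReal.ofReal_le_one.2 (min_le_left _ _)
      _ = ENNReal.ofReal 1 := by simp
  · intro lam hlam
    obtain ⟨a, b, C, rfl, ha, hb⟩ := freq_split (WP_TB hg'm Wg) (WP_TB hmm Wm) lam (fun τ h1 h2 => by
      have e1 : Tendsto (fun j => eI g' (τ j)) atTop (𝓝 0) := by
        have := ENNReal.tendsto_ofReal h1
        simpa [ENNReal.ofReal_toReal (eI_ne_top _ _)] using this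
      have e2 : Tendsto (fun j => eI m (τ j)) atTop (𝓝 0) := by
        have := ENNReal.tendsto_ofReal h2
        simpa [ENNReal.ofReal_toReal (eI_ne_top _ _)] using this
      have e3 : Tendsto (fun j => eI (fun t => (g' t, m t)) (τ j)) atTop (𝓝 0) := by
        have e4 := e1.add e2
        rw [add_zero] at e4
        exact tendsto_of_tendsto_of_tendsto_of_le_of_le tendsto_const_nhds e4 (fun _ => zero_le)
          fun j => eI_prod_le hg'm (τ j)
      refine hlam τ ?_
      simp_rw [weylDinf_eq]
      exact hS.ret hh τ e3)
    exact Set.add_mem_add (mem_WMod_of_bound hgg' tg ha) (mem_WMod_of_bound hμμ' tm2 hb)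
  · filter_upwards [hμμ'] with t ht
    rw [ht]
    exact (hsel _ _ (hKc t)).1
  · filter_upwards [hμμ', hgg'] with t ht ht'
    rw [ht, ht']
    exact (hsel _ _ (hKc t)).2
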